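/- Fix integers d ≥ 1, r ≥ 0 and a strict partition λ with d parts such that λ_i ≤ r + 2d − 2i + 1 for all i. Then |BS(Z(d,r))|_λ| = |Red(w^λ)|, i.e. the number of balanced shifted tableaux of shape Z(d,r) in which, for every i ∈ {1,…,d}, each of the entries N + σ_{i−1} + 1, …, N + σ_i occurs in row i, equals the number of reduced words of w^λ. -/

import Mathlib

open scoped BigOperators

namespace BST

/-- `lam` (1-indexed, with `d` parts) is a strict partition: strictly decreasing
positive parts `lam 1 > lam 2 > ⋯ > lam d > 0`. -/
def IsStrictPartition (d : ℕ) (lam : ℕ → ℕ) : Prop :=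
  (∀ i : ℕ, 1 ≤ i → i < d → lam (i + 1) < lam i) ∧ 1 ≤ lam d

/-- The size `|λ| = λ_1 + ⋯ + λ_d`. -/
def sizeP (d : ℕ) (lam : ℕ → ℕ) : ℕ := ∑ i ∈ Finset.Icc 1 d, lam i

/-- The shifted diagram `D(λ) ⊆ ℤ × ℤ`: row `i` (1 ≤ i ≤ d) occupies columns
`i - d, …, λ_i + i - d - 1`. -/
def Diagram (d : ℕ) (lam : ℕ → ℕ) : Set (ℤ × ℤ) :=
  {p : ℤ × ℤ | 1 ≤ p.1 ∧ p.1 ≤ (d : ℤ) ∧ p.1 - (d : ℤ) ≤ p.2 ∧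
    p.2 + (d : ℤ) + 1 ≤ (lam p.1.toNat : ℤ) + p.1}

/-- The hook `H(i,c)`. -/
def Hook (d : ℕ) (lam : ℕ → ℕ) (i c : ℤ) : Set (ℤ × ℤ) :=
  {(i, c)} ∪ {p ∈ Diagram d lam | (p.1 = i ∧ c < p.2) ∨ (p.2 = c ∧ i < p.1)} ∪
    {p ∈ Diagram d lam | c < 0 ∧ p.1 = (d : ℤ) + 1 + c}

/-- The extended hook `H̃(i,c)`. -/
def ExtHook (d : ℕ) (lam : ℕ → ℕ) (i c : ℤ) : Set (ℤ × ℤ) :=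
  Hook d lam i c ∪ {p : ℤ × ℤ | c < 0 ∧ p = ((d : ℤ) + 1 + c, c)}

/-- The extended diagram `D(λ) ∪ {(i, i - d - 1) : 1 ≤ i ≤ d}`. -/
def ExtDiagram (d : ℕ) (lam : ℕ → ℕ) : Set (ℤ × ℤ) :=
  Diagram d lam ∪ {p : ℤ × ℤ | 1 ≤ p.1 ∧ p.1 ≤ (d : ℤ) ∧ p.2 = p.1 - ((d : ℤ) + 1)}

/-- The extended filling `B̃`, with `B̃(i, i - d - 1) = B(i, 0)`. -/
def ExtFilling (d : ℕ) (B : ℤ × ℤ → ℕ) : ℤ × ℤ → ℕ :=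
  fun p => if p.2 = p.1 - ((d : ℤ) + 1) then B (p.1, 0) else B p

/-- The rank function `rk(i,c)`. -/
def rk (d : ℕ) (lam : ℕ → ℕ) (i c : ℤ) : ℤ :=
  if 0 ≤ c then (lam i.toNat : ℤ) - d + i - c
  else (lam i.toNat : ℤ) - d + i + (lam ((d : ℤ) + 1 + c).toNat : ℤ) + c + 1

/-- A bijective filling of `D(λ)` with `1, …, |λ|` (normalized to be `0` off the diagram). -/
def IsFilling (d : ℕ) (lam : ℕ → ℕ) (B : ℤ × ℤ → ℕ) : Prop :=
  Set.BijOn B (Diagram d lam) (Set.Icc 1 (sizeP d lam)) ∧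
    ∀ p : ℤ × ℤ, p ∉ Diagram d lam → B p = 0

/-- A balanced shifted tableau: a bijective filling such that at each box `(i,c)`,
`B(i,c)` is the `rk(i,c)`-th largest entry of the multiset of values of `B̃` on the
extended hook, i.e. exactly `rk(i,c) - 1` boxes of the extended hook carry a value
strictly larger than `B(i,c)`. -/
def IsBalanced (d : ℕ) (lam : ℕ → ℕ) (B : ℤ × ℤ → ℕ) : Prop :=
  IsFilling d lam B ∧ ∀ p ∈ Diagram d lam,
    ({q ∈ ExtHook d lam p.1 p.2 | B p < ExtFilling d B q}.ncard : ℤ) =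
      rk d lam p.1 p.2 - 1

/-- A standard Young tableau of shifted shape `λ`. -/
def IsSYT (d : ℕ) (lam : ℕ → ℕ) (B : ℤ × ℤ → ℕ) : Prop :=
  IsFilling d lam B ∧ ∀ p ∈ Diagram d lam, ∀ q ∈ Diagram d lam,
    ((p.1 = q.1 ∧ p.2 < q.2) → B p < B q) ∧ ((p.2 = q.2 ∧ p.1 < q.1) → B p < B q)

/-- The simple reflections of `W(B_n)`, acting on `ℤ`: `s 0` swaps `1 ↔ -1`,
and `s a` (for `a ≥ 1`) swaps `a ↔ a+1` and `-a ↔ -(a+1)`. -/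
def sB (a : ℕ) : Equiv.Perm ℤ :=
  if a = 0 then Equiv.swap 1 (-1)
  else Equiv.swap (a : ℤ) ((a : ℤ) + 1) * Equiv.swap (-(a : ℤ)) (-(a : ℤ) - 1)

/-- The product `s_{a_1} s_{a_2} ⋯ s_{a_m}` of a word. -/
def wordProd (L : List ℕ) : Equiv.Perm ℤ := (L.map sB).prod

/-- A signed permutation in `W(B_n)`: odd, and the identity beyond `n`. -/
def IsSignedPerm (n : ℕ) (w : Equiv.Perm ℤ) : Prop :=
  (∀ i : ℤ, w (-i) = -(w i)) ∧ ∀ i : ℤ, (n : ℤ) < |i| → w i = i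

/-- The Coxeter length of `w` in `W(B_n)`. -/
noncomputable def lengthB (n : ℕ) (w : Equiv.Perm ℤ) : ℕ :=
  sInf {m : ℕ | ∃ L : List ℕ, (∀ a ∈ L, a < n) ∧ wordProd L = w ∧ L.length = m}

/-- `L` is a reduced word of `w` in `W(B_n)`. -/
def IsReducedWord (n : ℕ) (w : Equiv.Perm ℤ) (L : List ℕ) : Prop :=
  (∀ a ∈ L, a < n) ∧ wordProd L = w ∧ L.length = lengthB n w

/-- The vector `e_k` (for `k ≥ 1` the `k`-th standard basis vector, with the
conventions `e 0 = 0` and `e (-k) = - e k`), represented as an odd function `ℤ → ℤ`. -/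
def eVec (k : ℤ) : ℤ → ℤ :=
  fun t => if t = 0 then 0 else if t = k then 1 else if t = -k then -1 else 0

/-- The positive roots of type `B_n`. -/
def PosRoots (n : ℕ) : Set (ℤ → ℤ) :=
  {v | (∃ i j : ℤ, 1 ≤ i ∧ i < j ∧ j ≤ (n : ℤ) ∧
        (v = eVec j - eVec i ∨ v = eVec j + eVec i)) ∨
       (∃ i : ℤ, 1 ≤ i ∧ i ≤ (n : ℤ) ∧ v = eVec i)}

/-- The action of a signed permutation on vectors: `w · e_i = e_{w(i)}`. -/
def actB (w : Equiv.Perm ℤ) (v : ℤ → ℤ) : ℤ → ℤ := fun t => v (w⁻¹ t)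

/-- The inversion set `Inv(w) = {α ∈ Φ⁺ : w⁻¹ · α ∈ -Φ⁺}`. -/
def InvSet (n : ℕ) (w : Equiv.Perm ℤ) : Set (ℤ → ℤ) :=
  {α | α ∈ PosRoots n ∧ -(actB w⁻¹ α) ∈ PosRoots n}

/-- The simple roots: `α_0 = e_1` and `α_a = e_{a+1} - e_a` for `a ≥ 1`. -/
def alphaRoot (a : ℕ) : ℤ → ℤ :=
  if a = 0 then eVec 1 else eVec ((a : ℤ) + 1) - eVec (a : ℤ)

/-- The reflection order of a word: `reflOrder L t = γ_{t+1} = s_{a_1} ⋯ s_{a_t} · α_{a_{t+1}}`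
(0-indexed). -/
def reflOrder (L : List ℕ) (t : ℕ) : ℤ → ℤ :=
  actB (wordProd (L.take t)) (alphaRoot (L.getD t 0))

/-- The trapezoid `Z(d,r) = (r+2d-1, r+2d-3, …, r+1)`. -/
def Zlam (d r : ℕ) : ℕ → ℕ := fun i => r + 2 * d + 1 - 2 * i

/-- The labeling `f : D(Z(d,r)) → Φ⁺`. -/
def fLabel (d r : ℕ) (p : ℤ × ℤ) : ℤ → ℤ :=
  if p.2 ≤ 0 then eVec ((d : ℤ) + 1 - p.1) - eVec p.2
  else if p.2 ≤ (r : ℤ) then eVec ((d : ℤ) + 1 - p.1) + eVec (p.2 + (d : ℤ))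
  else eVec ((d : ℤ) + 1 - p.1) - eVec (p.2 - (r : ℤ))

/-- The extended labeling `f̃`, with `f̃(i, i - d - 1) = 2 e_{d+1-i}`. -/
def fExtLabel (d r : ℕ) (p : ℤ × ℤ) : ℤ → ℤ :=
  if p.2 = p.1 - ((d : ℤ) + 1) then (2 : ℤ) • eVec ((d : ℤ) + 1 - p.1)
  else fLabel d r p

/-- `w` is the signed permutation `w^{(d,r)} ∈ W(B_{d+r})`, i.e.
`w(i) = d + i` for `1 ≤ i ≤ r` and `w(i) = -(i - r)` for `r < i ≤ d + r`. -/
def IsWdr (d r : ℕ) (w : Equiv.Perm ℤ) : Prop :=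
  IsSignedPerm (d + r) w ∧
    (∀ i : ℤ, 1 ≤ i → i ≤ (r : ℤ) → w i = (d : ℤ) + i) ∧
    (∀ i : ℤ, (r : ℤ) < i → i ≤ (d : ℤ) + (r : ℤ) → w i = -(i - r))


/-- `x` lies strictly between `y` and `z` (i.e. `min(y,z) < x < max(y,z)`). -/
def Between (x y z : ℕ) : Prop := (y < x ∧ x < z) ∨ (z < x ∧ x < y)

/-- A nonempty list is unimodal: strictly decreasing down to its minimum
(at 0-indexed position `k`), then strictly increasing. -/
def Unimodal (L : List ℕ) : Prop :=
  ∃ k : ℕ, k < L.length ∧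
    (∀ a b : ℕ, a < b → b ≤ k → L.getD b 0 < L.getD a 0) ∧
    (∀ a b : ℕ, k ≤ a → a < b → b < L.length → L.getD a 0 < L.getD b 0)

/-- Row `i` of the distinguished tableau of shape `Z(d,r)`:
`(r+d-i, …, r+1, 0, 1, …, r+d-i)`. -/
def rowWord (d r i : ℕ) : List ℕ :=
  (List.range (r + 2 * (d - i) + 1)).map fun t =>
    if t < d - i then r + (d - i) - t else t - (d - i)

/-- The reading word `π(T) = T_d T_{d-1} ⋯ T_1` of the distinguished tableau of
shape `Z(d,r)`. -/
def piWord (d r : ℕ) : List ℕ :=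
  (List.range d).flatMap fun k => rowWord d r (d - k)

/-- `μ_i = Z(d,r)_i - λ_i`. -/
def muF (d r : ℕ) (lam : ℕ → ℕ) (i : ℕ) : ℕ := r + 2 * d + 1 - 2 * i - lam i

/-- `σ_i = μ_1 + ⋯ + μ_i`. -/
def sigmaF (d r : ℕ) (lam : ℕ → ℕ) (i : ℕ) : ℕ := ∑ t ∈ Finset.Icc 1 i, muF d r lam t

/-- `ν_i = min{μ_i, …, μ_d}`. -/
noncomputable def nuF (d r : ℕ) (lam : ℕ → ℕ) (i : ℕ) : ℕ :=
  sInf {m : ℕ | ∃ j : ℕ, i ≤ j ∧ j ≤ d ∧ m = muF d r lam j}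

/-- The word `a^λ`: the concatenation over `i = 1, …, d` of the increasing runs
`(d+r-i-μ_i+1, …, d+r-i)`. -/
def aLamWord (d r : ℕ) (lam : ℕ → ℕ) : List ℕ :=
  (List.range d).flatMap fun k =>
    (List.range (muF d r lam (k + 1))).map fun t =>
      d + r - (k + 1) - muF d r lam (k + 1) + 1 + t

/-- Row `i` of the tableau `P(w^λ)`: entries `P(i,c) = c` for `c ≥ 0` and
`P(i,c) = r - c - ν_{d+1+c}` for `c < 0`. -/
noncomputable def rowWordP (d r : ℕ) (lam : ℕ → ℕ) (i : ℕ) : List ℕ :=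
  (List.range (lam i)).map fun t =>
    if t < d - i then r + (d - i) - t - nuF d r lam (i + 1 + t) else t - (d - i)

/-- The reading word `π(P(w^λ))`. -/
noncomputable def piWordP (d r : ℕ) (lam : ℕ → ℕ) : List ℕ :=
  (List.range d).flatMap fun k => rowWordP d r lam (d - k)

/-- The shape obtained from `λ` by adding one box at the end of row `i`. -/
def stepShape (lam : ℕ → ℕ) (i : ℕ) : ℕ → ℕ :=
  fun t => if t = i then lam i + 1 else lam t

/-- The box-adding map `f_i` on fillings: swap columns `j = λ_i + i - d` and `j + 1`
(in rows `1, …, i-1`), and put the value `N + 1` in the new box `(i, j)`. -/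
def addBox (d : ℕ) (lam : ℕ → ℕ) (i : ℕ) (N : ℕ) (B : ℤ × ℤ → ℕ) : ℤ × ℤ → ℕ :=
  fun p =>
    if p = ((i : ℤ), (lam i : ℤ) + (i : ℤ) - (d : ℤ)) then N + 1
    else if 1 ≤ p.1 ∧ p.1 < (i : ℤ) ∧ p.2 = (lam i : ℤ) + (i : ℤ) - (d : ℤ) then
      B (p.1, p.2 + 1)
    else if 1 ≤ p.1 ∧ p.1 < (i : ℤ) ∧ p.2 = (lam i : ℤ) + (i : ℤ) - (d : ℤ) + 1 then
      B (p.1, p.2 - 1)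
    else B p

/-- Successively apply the box-adding maps along a list of row indices,
tracking the current shape. -/
def FmapAux (d : ℕ) : List ℕ → (ℕ → ℕ) → (ℤ × ℤ → ℕ) → (ℤ × ℤ → ℕ)
  | [], _, B => B
  | i :: rest, lam, B => FmapAux d rest (stepShape lam i) (addBox d lam i (sizeP d lam) B)

/-- The shape after successively adding boxes along a list of row indices. -/
def shapeAux : List ℕ → (ℕ → ℕ) → (ℕ → ℕ)
  | [], lam => lam
  | i :: rest, lam => shapeAux rest (stepShape lam i)

/-- The list of row indices `1^{μ_1} 2^{μ_2} ⋯ d^{μ_d}` used to pad `λ` to `Z(d,r)`. -/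
def rowsList (d r : ℕ) (lam : ℕ → ℕ) : List ℕ :=
  (List.range d).flatMap fun k => List.replicate (muF d r lam (k + 1)) (k + 1)

/-- `BS(Z(d,r))|_λ`: balanced tableaux of shape `Z(d,r)` such that for each
`i ∈ {1,…,d}` the entries `N + σ_{i-1} + 1, …, N + σ_i` all occur in row `i`. -/
def BSRestricted (d r : ℕ) (lam : ℕ → ℕ) : Set (ℤ × ℤ → ℕ) :=
  {T | IsBalanced d (Zlam d r) T ∧ ∀ i : ℕ, 1 ≤ i → i ≤ d →
    ∀ k : ℕ, sizeP d lam + sigmaF d r lam (i - 1) + 1 ≤ k →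
      k ≤ sizeP d lam + sigmaF d r lam i →
      ∃ c : ℤ, ((i : ℤ), c) ∈ Diagram d (Zlam d r) ∧ T ((i : ℤ), c) = k}

/-- `w ∈ W(B_n)` pattern embeds the signed pattern `v` (given as its one-line
notation, a list of nonzero integers). -/
def PatternEmbeds (n : ℕ) (w : Equiv.Perm ℤ) (v : List ℤ) : Prop :=
  ∃ idx : Fin v.length → ℤ, StrictMono idx ∧
    (∀ j, 1 ≤ idx j ∧ idx j ≤ (n : ℤ)) ∧
    (∀ j, 0 < w (idx j) ↔ 0 < v.get j) ∧
    (∀ j k, |w (idx j)| < |w (idx k)| ↔ |v.get j| < |v.get k|)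

/-!
A reduced word of `w`, read from the right, creates the inversions of `w` one at a time. Labeling
each inversion by the position of the letter that creates it, exactly half of the labels in the root
hook of `(p, q)`, the pairs `(p, k)` and `(k, q)` with `p < k < q`, exceed the label of `(p, q)`.
Conversely, the inversion `(p, q)` labeled `1` in such a balanced labeling has adjacent values
`w p = w q + 1`, hence comes from a simple reflection, and removing it leaves a balanced labeling.
So reduced words are the same as balanced labelings.

The boxes of `Z(d,r)` are the inversions of `w^{(d,r)}`, row `i` consisting of the pairs `(p, q)`
with `q = d + r + 1 - i`, and extended hooks correspond to root hooks. Hence `BS(Z(d,r))` is in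
bijection with the reduced words of `w^{(d,r)}`. Reading `a^λ` from its last letter, each letter is
the only one that extends the word after it by an inversion in the prescribed row; therefore a
reduced word ends in `a^λ` exactly when its largest labels lie in the rows demanded by
`BS(Z(d,r))|_λ`, and deleting the suffix `a^λ` leaves a reduced word of `w^λ`.
-/

/-! ### Signed permutations -/

theorem sB_apply (a : ℕ) (x : ℤ) : sB a x =
    if a = 0 then (if x = 1 then -1 else if x = -1 then 1 else x)
    else if x = a then a + 1 else if x = a + 1 then a else if x = -a then -a - 1
      else if x = -a - 1 then -a else x := by
  unfold sB
  by_cases h : a = 0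
  · simp [h, Equiv.swap_apply_def]
  · simp only [h, if_false, Equiv.Perm.mul_apply, Equiv.swap_apply_def]
    split_ifs <;> omega

theorem sB_sB_apply (a : ℕ) (x : ℤ) : sB a (sB a x) = x := by
  generalize hy : sB a x = y
  rw [sB_apply] at hy ⊢
  split_ifs at hy ⊢ <;> omega

theorem sB_mul_self (a : ℕ) : sB a * sB a = 1 :=
  Equiv.ext (sB_sB_apply a)

theorem sB_inv (a : ℕ) : (sB a)⁻¹ = sB a :=
  inv_eq_of_mul_eq_one_left (sB_mul_self a)

theorem sB_odd (a : ℕ) : Function.Odd (sB a) := fun x => by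
  rw [sB_apply, sB_apply]
  split_ifs <;> omega

theorem isSignedPerm_sB {n a : ℕ} (h : a < n) : IsSignedPerm n (sB a) := by
  refine ⟨sB_odd a, fun x hx => ?_⟩
  rw [lt_abs] at hx
  rw [sB_apply]
  split_ifs <;> omega

theorem isSignedPerm_one (n : ℕ) : IsSignedPerm n 1 := ⟨fun _ => rfl, fun _ _ => rfl⟩

namespace IsSignedPerm

variable {n : ℕ} {v w : Equiv.Perm ℤ}

theorem odd (hw : IsSignedPerm n w) : Function.Odd w := hw.1

theorem mul (hv : IsSignedPerm n v) (hw : IsSignedPerm n w) : IsSignedPerm n (v * w) :=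
  ⟨fun i => by simp only [Equiv.Perm.mul_apply, hw.1 i, hv.1], fun i hi => by
    rw [Equiv.Perm.mul_apply, hw.2 i hi, hv.2 i hi]⟩

theorem inv (hw : IsSignedPerm n w) : IsSignedPerm n w⁻¹ :=
  ⟨fun i => by rw [Equiv.Perm.inv_eq_iff_eq, hw.1, neg_inj]; exact (w.apply_symm_apply i).symm,
    fun i hi => by rw [Equiv.Perm.inv_eq_iff_eq, hw.2 i hi]⟩

theorem abs_apply_le (hw : IsSignedPerm n w) {i : ℤ} (hi : |i| ≤ n) : |w i| ≤ n := by
  by_contra! h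
  have hfix : w i = i := w.injective (hw.2 _ h)
  rw [hfix] at h
  omega

end IsSignedPerm

theorem odd_mul {v w : Equiv.Perm ℤ} (hv : Function.Odd v) (hw : Function.Odd w) :
    Function.Odd (v * w : Equiv.Perm ℤ) := fun x => by
  simp only [Equiv.Perm.mul_apply, hw x, hv (w x)]

theorem wordProd_nil : wordProd [] = 1 := rfl

theorem wordProd_cons (a : ℕ) (L : List ℕ) : wordProd (a :: L) = sB a * wordProd L := by
  simp [wordProd]

theorem wordProd_append (L K : List ℕ) : wordProd (L ++ K) = wordProd L * wordProd K := by
  simp [wordProd]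

theorem wordProd_reverse (L : List ℕ) : wordProd L.reverse = (wordProd L)⁻¹ := by
  simp [wordProd, List.prod_inv_reverse, Function.comp_def, sB_inv]

theorem wordProd_odd (L : List ℕ) : Function.Odd (wordProd L) := by
  induction L with
  | nil => exact fun _ => rfl
  | cons a L ih => rw [wordProd_cons]; exact odd_mul (sB_odd a) ih

theorem wordProd_pos {L : List ℕ} (hL : ∀ a ∈ L, 0 < a) {p : ℤ} (hp : 0 < p) :
    0 < wordProd L p := by
  induction L with
  | nil => simpa [wordProd_nil] using hp
  | cons a L ih =>
    obtain ⟨ha, hL⟩ := List.forall_mem_cons.1 hL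
    have := ih hL
    rw [wordProd_cons, Equiv.Perm.mul_apply, sB_apply]
    split_ifs <;> omega

theorem isSignedPerm_wordProd {n : ℕ} {L : List ℕ} (h : ∀ a ∈ L, a < n) :
    IsSignedPerm n (wordProd L) := by
  induction L with
  | nil => exact isSignedPerm_one n
  | cons a L ih =>
    rw [List.forall_mem_cons] at h
    rw [wordProd_cons]
    exact (isSignedPerm_sB h.1).mul (ih h.2)

/-! ### Positive roots as pairs, and inversions -/

/-- The positive roots of type `B`: with `e 0 = 0` and `e (-k) = - e k`, the pair `(p, q)` with
`-q < p < q` stands for `e q - e p`. -/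
def posPairs : Set (ℤ × ℤ) := {b | -b.2 < b.1 ∧ b.1 < b.2}

/-- For `p < q`, the positive pair of the root proportional to `e q - e p`; in the degenerate case
`p = -q` the vector is `2 e q` and the root is `e q`. -/
def rootPair (p q : ℤ) : ℤ × ℤ :=
  if -p < q then (p, q) else if q < -p then (-q, -p) else (0, q)

/-- The positive roots that `w` makes negative, that is, the roots of `InvSet n w⁻¹`, recorded as
pairs so that root hooks are described by an integer between `p` and `q`. -/
def inversions (w : Equiv.Perm ℤ) : Set (ℤ × ℤ) := {b ∈ posPairs | w b.2 < w b.1}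

/-- `e z - e y` is the simple root `α_a` or its negative. -/
def IsSimpleUpToSign (a : ℕ) (y z : ℤ) : Prop :=
  (y = a ∧ z = a + 1) ∨ (y = a + 1 ∧ z = a) ∨ (y = -a - 1 ∧ z = -a) ∨ (y = -a ∧ z = -a - 1)

/-- The positive root among `± w⁻¹ α_a`: the only one whose inversion status differs between `w`
and `s_a w`. -/
def simplePair (w : Equiv.Perm ℤ) (a : ℕ) : ℤ × ℤ :=
  rootPair (min (w.symm a) (w.symm (a + 1))) (max (w.symm a) (w.symm (a + 1)))

theorem mem_inversions {w : Equiv.Perm ℤ} {p q : ℤ} :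
    (p, q) ∈ inversions w ↔ (-q < p ∧ p < q) ∧ w q < w p := Iff.rfl

theorem rootPair_mem_posPairs {p q : ℤ} (h : p < q) : rootPair p q ∈ posPairs := by
  unfold rootPair posPairs
  split_ifs <;> simp only [Set.mem_ofPred_eq] <;> omega

theorem rootPair_eq_self {b : ℤ × ℤ} (hb : b ∈ posPairs) : rootPair b.1 b.2 = b :=
  if_pos (neg_lt.1 hb.1)

theorem rootPair_neg_neg (p q : ℤ) : rootPair (-q) (-p) = rootPair p q := by
  unfold rootPair
  split_ifs <;> simp only [Prod.mk.injEq, neg_neg, true_and, and_true] <;> omega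

theorem rootPair_mem_inversions_iff {w : Equiv.Perm ℤ} (hw : Function.Odd w) {p q : ℤ}
    (h : p < q) : rootPair p q ∈ inversions w ↔ w q < w p := by
  have hp := hw p
  have hq := hw q
  have h0 : w 0 = 0 := hw.map_zero
  refine (and_iff_right (rootPair_mem_posPairs h)).trans ?_
  unfold rootPair
  split_ifs with h1 h2
  · rfl
  · simp only [hp, hq, neg_lt_neg_iff]
  · obtain rfl : q = -p := by omega
    simp only [h0]
    omega

theorem sB_lt_sB_iff {a : ℕ} {y z : ℤ} (h : y ≠ -z) :
    sB a z < sB a y ↔ (z < y ↔ ¬IsSimpleUpToSign a y z) := by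
  rw [sB_apply, sB_apply, IsSimpleUpToSign]
  split_ifs <;> omega

theorem IsSimpleUpToSign.sB {a : ℕ} {y z : ℤ} (h : IsSimpleUpToSign a y z) :
    IsSimpleUpToSign a (sB a y) (sB a z) := by
  grind [IsSimpleUpToSign, sB_apply]

section Odd

variable {v w : Equiv.Perm ℤ}

theorem simplePair_mem_posPairs (w : Equiv.Perm ℤ) (a : ℕ) : simplePair w a ∈ posPairs := by
  refine rootPair_mem_posPairs (min_lt_max.2 fun h => ?_)
  have := w.symm.injective h
  omega

theorem apply_ne_neg_apply (hw : Function.Odd w) {b : ℤ × ℤ} (hb : b ∈ posPairs) :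
    w b.1 ≠ -w b.2 := by
  rw [← hw b.2, w.injective.ne_iff]
  exact hb.1.ne'

theorem eq_simplePair_iff (hw : Function.Odd w) {a : ℕ} {b : ℤ × ℤ} (hb : b ∈ posPairs) :
    b = simplePair w a ↔ IsSimpleUpToSign a (w b.1) (w b.2) := by
  obtain ⟨p, q⟩ := b
  obtain ⟨hb1, hb2⟩ : -q < p ∧ p < q := hb
  unfold simplePair rootPair IsSimpleUpToSign
  generalize hx : w.symm a = x
  generalize hy : w.symm (a + 1) = y
  rw [Equiv.symm_apply_eq] at hx hy
  have hx' : -(a : ℤ) = w (-x) := by rw [hw, hx]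
  have hy' : -(a : ℤ) - 1 = w (-y) := by rw [hw, ← hy]; ring
  rw [hy', hx', hy, hx]
  simp only [w.injective.eq_iff]
  have hxy : x ≠ y := by rintro h; rw [h] at hx; omega
  have hxy' : x ≠ -y := by rintro h; rw [h] at hx; omega
  split_ifs <;> simp only [Prod.mk.injEq] <;> omega

theorem inversions_sB_mul (hw : Function.Odd w) (a : ℕ) :
    inversions (sB a * w) = symmDiff (inversions w) {simplePair w a} := by
  ext b
  rw [Set.mem_symmDiff, Set.mem_singleton_iff]
  by_cases hb : b ∈ posPairs
  · simp only [inversions, Set.mem_ofPred_eq, hb, true_and, Equiv.Perm.mul_apply,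
      sB_lt_sB_iff (apply_ne_neg_apply hw hb), eq_simplePair_iff hw hb]
    grind
  · have hb' : b ≠ simplePair w a := fun h => hb (h ▸ simplePair_mem_posPairs w a)
    simp only [inversions, Set.mem_ofPred_eq, hb, hb', false_and, or_self]

theorem inversions_sB_mul_of_notMem (hw : Function.Odd w) {a : ℕ}
    (h : simplePair w a ∉ inversions w) :
    inversions (sB a * w) = insert (simplePair w a) (inversions w) := by
  rw [inversions_sB_mul hw, (Set.disjoint_singleton_right.2 h).symmDiff_eq_sup, Set.insert_eq,
    sup_comm]
  rfl

theorem inversions_sB_mul_of_mem (hw : Function.Odd w) {a : ℕ}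
    (h : simplePair w a ∈ inversions w) :
    inversions (sB a * w) = inversions w \ {simplePair w a} := by
  rw [inversions_sB_mul hw, symmDiff_of_ge (Set.singleton_subset_iff.2 h)]

theorem simplePair_sB_mul (hw : Function.Odd w) (a : ℕ) :
    simplePair (sB a * w) a = simplePair w a := by
  have hb := simplePair_mem_posPairs (sB a * w) a
  have h := ((eq_simplePair_iff (odd_mul (sB_odd a) hw) hb).1 rfl).sB
  simp only [Equiv.Perm.mul_apply, sB_sB_apply] at h
  exact (eq_simplePair_iff hw hb).2 h

theorem simplePair_injective (hw : Function.Odd w) : Function.Injective (simplePair w) := by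
  intro a a' h
  have hb := simplePair_mem_posPairs w a
  have h1 := (eq_simplePair_iff hw hb).1 rfl
  have h2 := (eq_simplePair_iff hw hb).1 h
  unfold IsSimpleUpToSign at h1 h2
  omega

theorem exists_simplePair_eq (hw : Function.Odd w) {b : ℤ × ℤ} (hb : b ∈ posPairs)
    (h : w b.2 = w b.1 + 1 ∨ w b.1 = w b.2 + 1) : ∃ a, simplePair w a = b := by
  by_cases hs : 0 ≤ w b.1 ∧ 0 ≤ w b.2
  · refine ⟨(min (w b.1) (w b.2)).toNat, ((eq_simplePair_iff hw hb).2 ?_).symm⟩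
    unfold IsSimpleUpToSign
    omega
  · refine ⟨(min (-w b.1) (-w b.2)).toNat, ((eq_simplePair_iff hw hb).2 ?_).symm⟩
    unfold IsSimpleUpToSign
    omega

theorem exists_simplePair_eq_rootPair (hw : Function.Odd w) {p q : ℤ} (hpq : p < q)
    (h : w q = w p + 1 ∨ w p = w q + 1) : ∃ a, simplePair w a = rootPair p q := by
  have hp := hw p
  have hq := hw q
  refine exists_simplePair_eq hw (rootPair_mem_posPairs hpq) ?_
  unfold rootPair
  split_ifs with h1 h2
  · exact h
  · simp only [hp, hq]
    omega
  · obtain rfl : q = -p := by omega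
    omega

theorem lt_of_inversions_subset (hv : Function.Odd v) (hw : Function.Odd w)
    (h : inversions v ⊆ inversions w) {p q : ℤ} (hpq : p < q) (hv' : v q < v p) : w q < w p :=
  (rootPair_mem_inversions_iff hw hpq).1 (h ((rootPair_mem_inversions_iff hv hpq).2 hv'))

theorem perm_eq_one_of_strictMono {u : Equiv.Perm ℤ} (hu : StrictMono u) (h0 : u 0 = 0) :
    u = 1 := by
  have hsucc : ∀ x, u (x + 1) = u x + 1 :=
    fun x => (hu.orderIsoOfSurjective u u.surjective).map_succ x
  ext x
  induction x using Int.induction_on with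
  | zero => exact h0
  | succ k ih => rw [hsucc, ih]; rfl
  | pred k ih =>
    have := hsucc (-k - 1)
    rw [sub_add_cancel, ih] at this
    simp only [Equiv.Perm.one_apply] at this ⊢
    omega

theorem inversions_injOn_odd : Set.InjOn inversions {w : Equiv.Perm ℤ | Function.Odd w} := by
  intro v hv w hw h
  refine mul_inv_eq_one.1 (perm_eq_one_of_strictMono (fun y z hyz => ?_) ?_)
  · obtain ⟨y, rfl⟩ := w.surjective y
    obtain ⟨z, rfl⟩ := w.surjective z
    have hne : y ≠ z := ne_of_apply_ne w hyz.ne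
    simp only [Equiv.Perm.mul_apply, Equiv.Perm.inv_def, Equiv.symm_apply_apply]
    rcases hne.lt_or_gt with hyz' | hyz'
    · by_contra! hle
      exact hyz.asymm <|
        lt_of_inversions_subset hv hw h.le hyz' (hle.lt_of_ne (v.injective.ne hne.symm))
    · exact lt_of_inversions_subset hw hv h.ge hyz' hyz
  · have hw0 : w 0 = 0 := hw.map_zero
    rw [Equiv.Perm.mul_apply, Equiv.Perm.inv_eq_iff_eq.2 hw0.symm]
    exact hv.map_zero

theorem inversions_one : inversions 1 = ∅ :=
  Set.eq_empty_of_forall_notMem fun _ hb => lt_asymm hb.1.2 hb.2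

end Odd

/-! ### Length and reduced words -/

section Length

variable {n : ℕ} {v w : Equiv.Perm ℤ} {L S : List ℕ}

theorem inversions_snd_le (hw : IsSignedPerm n w) {b : ℤ × ℤ} (hb : b ∈ inversions w) :
    b.2 ≤ n := by
  obtain ⟨⟨h1, h2⟩, h3⟩ := hb
  by_contra! hn
  rw [hw.2 b.2 (by rw [lt_abs]; omega)] at h3
  rcases le_or_gt |b.1| n with hp | hp
  · have := (abs_le.1 (hw.abs_apply_le hp)).2
    omega
  · rw [hw.2 b.1 hp] at h3
    omega

theorem inversions_finite (hw : IsSignedPerm n w) : (inversions w).Finite := by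
  refine ((Set.finite_Icc (-(n : ℤ)) n).prod (Set.finite_Icc (-(n : ℤ)) n)).subset fun b hb => ?_
  have hn := inversions_snd_le hw hb
  obtain ⟨h1, h2⟩ := hb.1
  simp only [Set.mem_prod, Set.mem_Icc]
  omega

theorem encard_inversions_wordProd_le (L : List ℕ) :
    (inversions (wordProd L)).encard ≤ L.length := by
  induction L with
  | nil => simp [wordProd_nil, inversions_one]
  | cons a L ih =>
    calc (inversions (wordProd (a :: L))).encard
        ≤ (inversions (wordProd L) ∪ {simplePair (wordProd L) a}).encard := by
          rw [wordProd_cons, inversions_sB_mul (wordProd_odd L)]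
          exact Set.encard_le_encard symmDiff_le_sup
      _ ≤ (inversions (wordProd L)).encard + 1 :=
          (Set.encard_union_le _ _).trans_eq (by rw [Set.encard_singleton])
      _ ≤ (a :: L).length := by
          rw [List.length_cons, Nat.cast_add_one]
          gcongr

theorem ncard_inversions_wordProd_le (L : List ℕ) :
    (inversions (wordProd L)).ncard ≤ L.length :=
  ENat.toNat_le_of_le_natCast (encard_inversions_wordProd_le L)

theorem lt_of_simplePair_snd_le (hw : IsSignedPerm n w) {a : ℕ} (h : (simplePair w a).2 ≤ n) :
    a < n := by
  have hb := simplePair_mem_posPairs w a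
  have hs := (eq_simplePair_iff hw.odd hb).1 rfl
  obtain ⟨h1, h2⟩ := hb
  have e1 := abs_le.1 (hw.abs_apply_le (abs_le.2 (by omega : _ ≤ (simplePair w a).1 ∧ _ ≤ (n : ℤ))))
  have e2 := abs_le.1 (hw.abs_apply_le (abs_le.2 (by omega : _ ≤ (simplePair w a).2 ∧ _ ≤ (n : ℤ))))
  unfold IsSimpleUpToSign at hs
  omega

theorem exists_simplePair_of_lt (hv : Function.Odd v) (hw : Function.Odd w)
    (h : inversions v ⊆ inversions w) {p q : ℤ} (hpq : p < q) (hw' : w q < w p)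
    (hv' : v p < v q) : ∃ a, simplePair v a ∉ inversions v ∧ simplePair v a ∈ inversions w := by
  by_cases hone : v q = v p + 1
  · obtain ⟨a, ha⟩ := exists_simplePair_eq_rootPair hv hpq (.inl hone)
    refine ⟨a, ?_, ?_⟩
    · rw [ha, rootPair_mem_inversions_iff hv hpq]
      omega
    · rwa [ha, rootPair_mem_inversions_iff hw hpq]
  · obtain ⟨k, hk⟩ := v.surjective (v p + 1)
    have hkp : k ≠ p := by rintro rfl; omega
    have hkq : k ≠ q := by rintro rfl; omega
    have hsplit : (p < k ∧ w k < w p) ∨ (k < q ∧ w q < w k) := by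
      have hlt : k < p → w p < w k := fun h' => lt_of_inversions_subset hv hw h h' (by omega)
      have hgt : q < k → w k < w q := fun h' => lt_of_inversions_subset hv hw h h' (by omega)
      omega
    rcases hsplit with ⟨hpk, hwk⟩ | ⟨hkq, hwk⟩
    · exact exists_simplePair_of_lt hv hw h hpk hwk (by omega)
    · exact exists_simplePair_of_lt hv hw h hkq hwk (by omega)
termination_by (v q - v p).toNat
decreasing_by all_goals omega

theorem exists_simplePair_of_ssubset (hv : Function.Odd v) (hw : Function.Odd w)
    (h : inversions v ⊂ inversions w) :
    ∃ a, simplePair v a ∉ inversions v ∧ simplePair v a ∈ inversions w := by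
  obtain ⟨b, hbw, hbv⟩ := Set.exists_of_ssubset h
  have hle : v b.1 ≤ v b.2 := not_lt.1 fun hlt => hbv ⟨hbw.1, hlt⟩
  exact exists_simplePair_of_lt hv hw h.subset hbw.1.2 hbw.2
    (hle.lt_of_ne (v.injective.ne hbw.1.2.ne))

theorem exists_word {v : Equiv.Perm ℤ} (hv : IsSignedPerm n v) (hw : IsSignedPerm n w)
    (h : inversions v ⊆ inversions w) :
    ∃ L : List ℕ, (∀ a ∈ L, a < n) ∧ wordProd L * v = w ∧
      L.length + (inversions v).ncard = (inversions w).ncard := by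
  rcases h.eq_or_ssubset with heq | hss
  · exact ⟨[], by simp, inversions_injOn_odd hv.odd hw.odd heq, by simp [heq]⟩
  obtain ⟨a, hav, haw⟩ := exists_simplePair_of_ssubset hv.odd hw.odd hss
  have ha : a < n := lt_of_simplePair_snd_le hv (inversions_snd_le hw haw)
  have hinv := inversions_sB_mul_of_notMem hv.odd hav
  have hcard : (inversions (sB a * v)).ncard = (inversions v).ncard + 1 := by
    rw [hinv, Set.ncard_insert_of_notMem hav (inversions_finite hv)]
  have := Set.ncard_lt_ncard hss (inversions_finite hw)
  obtain ⟨L, hL, hprod, hlen⟩ := exists_word ((isSignedPerm_sB ha).mul hv) hw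
    (by rw [hinv]; exact Set.insert_subset haw h)
  refine ⟨L ++ [a], ?_, ?_, ?_⟩
  · exact List.forall_mem_append.2 ⟨hL, List.forall_mem_singleton.2 ha⟩
  · rw [← hprod, wordProd_append, wordProd_cons, wordProd_nil, mul_one, mul_assoc]
  · rw [List.length_append, List.length_singleton]
    omega
termination_by (inversions w).ncard - (inversions v).ncard
decreasing_by omega

theorem lengthB_wordProd_le (h : ∀ a ∈ L, a < n) : lengthB n (wordProd L) ≤ L.length :=
  Nat.sInf_le ⟨L, h, rfl, rfl⟩

theorem lengthB_eq_ncard_inversions (hw : IsSignedPerm n w) :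
    lengthB n w = (inversions w).ncard := by
  obtain ⟨L, hL, hprod, hlen⟩ :=
    exists_word (isSignedPerm_one n) hw (by simp [inversions_one])
  rw [mul_one] at hprod
  rw [inversions_one, Set.ncard_empty, add_zero] at hlen
  refine le_antisymm ?_ (le_csInf ⟨_, L, hL, hprod, rfl⟩ ?_)
  · rw [← hlen, ← hprod]
    exact lengthB_wordProd_le hL
  · rintro _ ⟨K, -, rfl, rfl⟩
    exact ncard_inversions_wordProd_le K

theorem IsReducedWord.isSignedPerm (h : IsReducedWord n w L) : IsSignedPerm n w :=
  h.2.1 ▸ isSignedPerm_wordProd h.1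

theorem isReducedWord_nil (n : ℕ) : IsReducedWord n 1 [] := by
  refine ⟨by simp, rfl, ?_⟩
  rw [lengthB_eq_ncard_inversions (isSignedPerm_one n), inversions_one, Set.ncard_empty,
    List.length_nil]

theorem IsReducedWord.length_eq (h : IsReducedWord n w L) : L.length = (inversions w).ncard :=
  h.2.2.trans (lengthB_eq_ncard_inversions h.isSignedPerm)

theorem exists_isReducedWord (hw : IsSignedPerm n w) : ∃ L, IsReducedWord n w L := by
  obtain ⟨L, hL, hprod, hlen⟩ := exists_word (isSignedPerm_one n) hw (by simp [inversions_one])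
  refine ⟨L, hL, by rwa [mul_one] at hprod, ?_⟩
  rwa [inversions_one, Set.ncard_empty, add_zero, ← lengthB_eq_ncard_inversions hw] at hlen

theorem lengthB_mul_le (hv : IsSignedPerm n v) (hw : IsSignedPerm n w) :
    lengthB n (v * w) ≤ lengthB n v + lengthB n w := by
  obtain ⟨K, hK, rfl, hKlen⟩ := exists_isReducedWord hv
  obtain ⟨L, hL, rfl, hLlen⟩ := exists_isReducedWord hw
  rw [← wordProd_append, ← hKlen, ← hLlen, ← List.length_append]
  exact lengthB_wordProd_le (List.forall_mem_append.2 ⟨hK, hL⟩)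

theorem lengthB_mul_inv_add (hv : IsSignedPerm n v) (hw : IsSignedPerm n w)
    (h : inversions v ⊆ inversions w) :
    lengthB n (w * v⁻¹) + lengthB n v = lengthB n w := by
  obtain ⟨L, hL, hprod, hlen⟩ := exists_word hv hw h
  apply le_antisymm
  · rw [lengthB_eq_ncard_inversions hv, lengthB_eq_ncard_inversions hw, ← hlen,
      ← eq_mul_inv_iff_mul_eq.2 hprod]
    gcongr
    exact lengthB_wordProd_le hL
  · simpa using lengthB_mul_le (hw.mul hv.inv) hv

theorem isReducedWord_append_iff (hv : IsReducedWord n v S) (hw : IsSignedPerm n w)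
    (h : inversions v ⊆ inversions w) :
    IsReducedWord n w (L ++ S) ↔ IsReducedWord n (w * v⁻¹) L := by
  have hlen := lengthB_mul_inv_add hv.isSignedPerm hw h
  have hS := hv.2.2
  unfold IsReducedWord
  rw [List.forall_mem_append, and_iff_left hv.1, wordProd_append, hv.2.1, eq_mul_inv_iff_mul_eq,
    List.length_append, ← hlen, hS, add_left_inj]

theorem IsReducedWord.tail {a : ℕ} (h : IsReducedWord n w (a :: L)) :
    IsReducedWord n (wordProd L) L ∧ simplePair (wordProd L) a ∉ inversions (wordProd L) := by
  obtain ⟨-, hL⟩ := List.forall_mem_cons.1 h.1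
  have hlen := h.length_eq
  rw [← h.2.1, wordProd_cons, List.length_cons] at hlen
  have hle := ncard_inversions_wordProd_le L
  have hfin := inversions_finite (isSignedPerm_wordProd hL)
  have hmem : simplePair (wordProd L) a ∉ inversions (wordProd L) := fun hmem => by
    rw [inversions_sB_mul_of_mem (wordProd_odd L) hmem] at hlen
    have := Set.ncard_le_ncard (Set.sdiff_subset (t := {simplePair (wordProd L) a})) hfin
    omega
  rw [inversions_sB_mul_of_notMem (wordProd_odd L) hmem, Set.ncard_insert_of_notMem hmem hfin,
    add_left_inj, ← lengthB_eq_ncard_inversions (isSignedPerm_wordProd hL)] at hlen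
  exact ⟨⟨hL, rfl, hlen⟩, hmem⟩

theorem IsReducedWord.cons {a : ℕ} (h : IsReducedWord n w L) (ha : a < n)
    (hmem : simplePair w a ∉ inversions w) : IsReducedWord n (sB a * w) (a :: L) := by
  have hw := h.isSignedPerm
  refine ⟨List.forall_mem_cons.2 ⟨ha, h.1⟩, by rw [wordProd_cons, h.2.1], ?_⟩
  rw [List.length_cons, h.length_eq, lengthB_eq_ncard_inversions ((isSignedPerm_sB ha).mul hw),
    inversions_sB_mul_of_notMem hw.odd hmem,
    Set.ncard_insert_of_notMem hmem (inversions_finite hw)]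

end Length

/-! ### Balanced labelings of inversion sets -/

/-- A bijective labeling of the inversions of `w` by `1, …, ℓ(w)`, with the label `0` elsewhere. -/
structure IsInversionLabeling (w : Equiv.Perm ℤ) (X : ℤ × ℤ → ℕ) : Prop where
  bijOn : Set.BijOn X (inversions w) (Set.Icc 1 (inversions w).ncard)
  eq_zero : ∀ b ∉ inversions w, X b = 0

/-- The number of larger labels in the root hook of `(p, q)`, which consists of the roots of the
pairs `(p, k)` and `(k, q)` with `p < k < q`. -/
noncomputable def hookCount (X : ℤ × ℤ → ℕ) (p q : ℤ) : ℕ :=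
  ((Finset.Ioo p q).filter fun k => X (rootPair p q) < X (rootPair p k)).card +
    ((Finset.Ioo p q).filter fun k => X (rootPair p q) < X (rootPair k q)).card

/-- An inversion labeling in which exactly half of the root hook of each inversion `(p, q)`,
that is `q - p - 1` of its members, has a larger label. -/
structure IsBalancedLabeling (w : Equiv.Perm ℤ) (X : ℤ × ℤ → ℕ) : Prop
    extends IsInversionLabeling w X where
  hookCount_eq : ∀ b ∈ inversions w, (hookCount X b.1 b.2 : ℤ) = b.2 - b.1 - 1

theorem hookCount_neg (X : ℤ × ℤ → ℕ) (p q : ℤ) : hookCount X (-q) (-p) = hookCount X p q := by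
  have hleft (k : ℤ) : rootPair (-q) k = rootPair (-k) q := by
    rw [← rootPair_neg_neg (-k), neg_neg]
  have hright (k : ℤ) : rootPair k (-p) = rootPair p (-k) := by
    rw [← rootPair_neg_neg p, neg_neg]
  unfold hookCount
  rw [rootPair_neg_neg, add_comm]
  congr 1 <;>
    refine Finset.card_nbij' Neg.neg Neg.neg ?_ ?_ (fun k _ => neg_neg k) fun k _ => neg_neg k <;>
    intro k hk <;>
    simp only [Finset.coe_filter, Finset.mem_Ioo, Set.mem_ofPred_eq, hleft, hright,
      neg_neg] at hk ⊢ <;>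
    omega

theorem hookCount_congr {X Y : ℤ × ℤ → ℕ} {p q : ℤ}
    (h : ∀ c, X (rootPair p q) < X c ↔ Y (rootPair p q) < Y c) :
    hookCount X p q = hookCount Y p q := by
  simp only [hookCount, h]

section Labeling

variable {v w : Equiv.Perm ℤ} {X : ℤ × ℤ → ℕ} {p q : ℤ}

namespace IsInversionLabeling

theorem one_le (hX : IsInversionLabeling w X) {b : ℤ × ℤ} (hb : b ∈ inversions w) : 1 ≤ X b :=
  (hX.bijOn.mapsTo hb).1

theorem mem_inversions_iff (hX : IsInversionLabeling w X) {b : ℤ × ℤ} :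
    b ∈ inversions w ↔ 0 < X b :=
  ⟨hX.one_le, fun h => by_contra fun hb => h.ne' (hX.eq_zero b hb)⟩

theorem pos_iff (hw : Function.Odd w) (hX : IsInversionLabeling w X) (h : p < q) :
    0 < X (rootPair p q) ↔ w q < w p :=
  hX.mem_inversions_iff.symm.trans (rootPair_mem_inversions_iff hw h)

theorem eq_of_eq_one (hX : IsInversionLabeling w X) {b c : ℤ × ℤ} (hb : X b = 1) (hc : X c = 1) :
    b = c :=
  hX.bijOn.injOn (hX.mem_inversions_iff.2 (by omega)) (hX.mem_inversions_iff.2 (by omega))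
    (hb.trans hc.symm)

theorem finite_inversions (hX : IsInversionLabeling w X) : (inversions w).Finite :=
  hX.bijOn.finite_iff_finite.2 (Set.finite_Icc _ _)

theorem pred (hX : IsInversionLabeling w X) {b : ℤ × ℤ} (hb : X b = 1)
    (hv : inversions v = inversions w \ {b}) : IsInversionLabeling v (X - 1) where
  bijOn := by
    have hbw : b ∈ inversions w := hX.mem_inversions_iff.2 (by omega)
    have hshift : Set.BijOn (fun t => t - 1) (Set.Icc 1 (inversions w).ncard \ {1})
        (Set.Icc 1 ((inversions w).ncard - 1)) := by
      refine ⟨fun t ht => ?_, fun s hs t ht h => ?_, fun t ht => ⟨t + 1, ?_, by grind⟩⟩ <;>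
        simp only [Set.mem_sdiff, Set.mem_Icc, Set.mem_singleton_iff] at * <;> omega
    rw [hv, Set.ncard_sdiff_singleton_of_mem hbw]
    exact hshift.comp (hb ▸ hX.bijOn.sdiff_singleton hbw)
  eq_zero c hc := by
    rw [hv] at hc
    by_cases hcb : c = b
    · simp [hcb, hb]
    · simp [hX.eq_zero c fun h => hc ⟨h, hcb⟩]

theorem succ (hX : IsInversionLabeling v X) {b : ℤ × ℤ} (hb : b ∉ inversions v)
    (hw : inversions w = insert b (inversions v)) :
    IsInversionLabeling w ((inversions w).indicator (X + 1)) where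
  bijOn := by
    have hXb : (X + 1) b = 1 := by simp [hX.eq_zero b hb]
    have hshift : Set.BijOn (fun t => t + 1) (Set.Icc 1 (inversions v).ncard)
        (Set.Icc 2 ((inversions v).ncard + 1)) := by
      refine ⟨fun t ht => ?_, fun s hs t ht h => ?_, fun t ht => ⟨t - 1, ?_, by grind⟩⟩ <;>
        simp only [Set.mem_Icc] at * <;> omega
    have hold : Set.BijOn (X + 1) (inversions v) (Set.Icc 2 ((inversions v).ncard + 1)) :=
      hshift.comp hX.bijOn
    have hIcc : Set.Icc 1 ((inversions v).ncard + 1) =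
        insert 1 (Set.Icc 2 ((inversions v).ncard + 1)) := by
      ext t
      simp only [Set.mem_insert_iff, Set.mem_Icc]
      omega
    refine Set.BijOn.congr (f₁ := X + 1) ?_ fun c hc => (Set.indicator_of_mem hc _).symm
    rw [hw, Set.ncard_insert_of_notMem hb hX.finite_inversions, hIcc]
    simpa only [hXb] using hold.insert (a := b) (by simp [hXb])
  eq_zero _ hc := Set.indicator_of_notMem hc _

theorem hookCount_of_eq_one (hw : Function.Odd w) (hX : IsInversionLabeling w X) {b : ℤ × ℤ}
    (hb : X b = 1) : hookCount X b.1 b.2 = (Finset.Ioo b.1 b.2).card +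
      ((Finset.Ioo b.1 b.2).filter fun k => w k < w b.1 ∧ w b.2 < w k).card := by
  obtain ⟨hpos, hinv⟩ : b ∈ inversions w := hX.mem_inversions_iff.2 (by omega)
  have hne {c : ℤ × ℤ} (hc : c ≠ b) : X c ≠ 1 := fun h => hc (hX.eq_of_eq_one h hb)
  have hleft : ∀ k ∈ Finset.Ioo b.1 b.2,
      (X (rootPair b.1 b.2) < X (rootPair b.1 k) ↔ w k < w b.1) := by
    intro k hk
    rw [Finset.mem_Ioo] at hk
    have := hne (c := rootPair b.1 k) (by grind [rootPair, posPairs])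
    rw [rootPair_eq_self hpos, hb, ← hX.pos_iff hw hk.1]
    omega
  have hright : ∀ k ∈ Finset.Ioo b.1 b.2,
      (X (rootPair b.1 b.2) < X (rootPair k b.2) ↔ w b.2 < w k) := by
    intro k hk
    rw [Finset.mem_Ioo] at hk
    have := hne (c := rootPair k b.2) (by grind [rootPair, posPairs])
    rw [rootPair_eq_self hpos, hb, ← hX.pos_iff hw hk.2]
    omega
  rw [hookCount, Finset.filter_congr hleft, Finset.filter_congr hright,
    ← Finset.card_union_add_card_inter, ← Finset.filter_or, ← Finset.filter_and,
    Finset.filter_true_of_mem (p := fun k => w k < w b.1 ∨ w b.2 < w k) fun k _ => by omega]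

end IsInversionLabeling

namespace IsBalancedLabeling

theorem hookCount_eq_of_ne_neg (hw : Function.Odd w) (hX : IsBalancedLabeling w X) (h : p < q)
    (hne : p ≠ -q) (hinv : w q < w p) : (hookCount X p q : ℤ) = q - p - 1 := by
  have hmem := (rootPair_mem_inversions_iff hw h).2 hinv
  have hX' := hX.hookCount_eq _ hmem
  unfold rootPair at hX'
  split_ifs at hX'
  · exact hX'
  · rw [hookCount_neg] at hX'
    omega
  · omega

theorem lt_of_forall_not_between (hw : Function.Odd w) (hX : IsBalancedLabeling w X) (h : p < q)
    (hne : p ≠ -q) (hinv : w q < w p)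
    (hno : ∀ k, p < k → k < q → ¬(w q < w k ∧ w k < w p)) {k : ℤ} (hpk : p < k) (hkq : k < q)
    (hk : w k < w p) : X (rootPair p q) < X (rootPair p k) := by
  set A := (Finset.Ioo p q).filter fun k => X (rootPair p q) < X (rootPair p k) with hA
  set B := (Finset.Ioo p q).filter fun k => X (rootPair p q) < X (rootPair k q) with hB
  have hdisj : Disjoint A B := by
    refine Finset.disjoint_filter.2 fun j hj hjA hjB => ?_
    rw [Finset.mem_Ioo] at hj
    exact hno j hj.1 hj.2
      ⟨(hX.pos_iff hw hj.2).1 (by omega), (hX.pos_iff hw hj.1).1 (by omega)⟩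
  have hcard : (Finset.Ioo p q).card ≤ (A ∪ B).card := by
    have hcount := hX.hookCount_eq_of_ne_neg hw h hne hinv
    rw [hookCount, ← hA, ← hB] at hcount
    rw [Finset.card_union_of_disjoint hdisj, Int.card_Ioo]
    omega
  have hAB : A ∪ B = Finset.Ioo p q :=
    Finset.eq_of_subset_of_card_le
      (Finset.union_subset (Finset.filter_subset _ _) (Finset.filter_subset _ _)) hcard
  have hmem : k ∈ A ∪ B := hAB ▸ Finset.mem_Ioo.2 ⟨hpk, hkq⟩
  rcases Finset.mem_union.1 hmem with hkA | hkB
  · exact (Finset.mem_filter.1 hkA).2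
  · exact absurd ⟨(hX.pos_iff hw hkq).1 ((Nat.zero_le _).trans_lt (Finset.mem_filter.1 hkB).2), hk⟩
      (hno k hpk hkq)

/-- For the first `m > q` with a value between `w q` and `w p`, the hook of `(p, m)` contains
`(p, q)`, whose label `1` is too small. The pair `(p, m)` has no such hook when `p = -m`, but then
`0` is an earlier such position. -/
theorem not_between_of_lt (hw : Function.Odd w) (hX : IsBalancedLabeling w X) (hpq : p < q)
    (hinv : w q < w p) (h1 : X (rootPair p q) = 1)
    (hno : ∀ k, p < k → k < q → ¬(w q < w k ∧ w k < w p)) {m : ℤ} (hpm : p < m) :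
    ¬(w q < w m ∧ w m < w p) := by
  induction hn : (m - p).toNat using Nat.strong_induction_on generalizing m with
  | _ n ih =>
    rintro ⟨hqm, hmp⟩
    have hlt {k : ℤ} (hpk : p < k) (hkm : k < m) : ¬(w q < w k ∧ w k < w p) :=
      ih _ (by omega) hpk rfl
    rcases lt_trichotomy m q with hmq | rfl | hmq
    · exact hno m hpm hmq ⟨hqm, hmp⟩
    · exact lt_irrefl _ hqm
    · have hne : p ≠ -m := by
        rintro rfl
        have hwm := hw m
        have hw0 : w 0 = 0 := hw.map_zero
        exact hlt (k := 0) (by omega) (by omega) (by omega)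
      have hlabel := hX.lt_of_forall_not_between hw hpm hne hmp
        (fun k hpk hkm hk => hlt hpk hkm ⟨by omega, hk.2⟩) hpq hmq hinv
      have hpos := (hX.pos_iff hw hpm).2 hmp
      omega

theorem apply_eq_add_one (hw : Function.Odd w) (hX : IsBalancedLabeling w X)
    (h1 : X (p, q) = 1) : w p = w q + 1 := by
  have hmem : (p, q) ∈ inversions w := hX.mem_inversions_iff.2 (by omega)
  obtain ⟨⟨-, hpq⟩, hinv⟩ := mem_inversions.1 hmem
  have hself : rootPair p q = (p, q) := rootPair_eq_self hmem.1
  have hno : ∀ k, p < k → k < q → ¬(w q < w k ∧ w k < w p) := by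
    intro k hpk hkq hk
    have hcount := hX.hookCount_eq _ hmem
    simp only [hX.hookCount_of_eq_one hw h1, Int.card_Ioo] at hcount
    have hempty : (Finset.Ioo p q).filter (fun k => w k < w p ∧ w q < w k) = ∅ :=
      Finset.card_eq_zero.1 (by omega)
    exact Finset.notMem_empty k (hempty ▸ by simp [hpk, hkq, hk])
  have hright {m : ℤ} (hm : p < m) : ¬(w q < w m ∧ w m < w p) :=
    hX.not_between_of_lt hw hpq hinv (hself ▸ h1) hno hm
  have hleft {m : ℤ} (hm : m < q) : ¬(w q < w m ∧ w m < w p) := by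
    have := hX.not_between_of_lt hw (p := -q) (q := -p) (m := -m) (by omega)
      (by rw [hw, hw]; omega) (by rw [rootPair_neg_neg, hself, h1])
      (fun k hqk hkp hk => hno (-k) (by omega) (by omega) (by
        rw [hw, hw] at hk
        rw [hw]
        omega)) (by omega)
    rw [hw, hw, hw] at this
    omega
  by_contra hne
  have hval := w.apply_symm_apply (w q + 1)
  rcases lt_or_ge p (w.symm (w q + 1)) with hlt | hge
  · exact hright hlt (by omega)
  · exact hleft (hge.trans_lt hpq) (by omega)

theorem pred (hX : IsBalancedLabeling w X) {b : ℤ × ℤ} (hb : X b = 1)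
    (hv : inversions v = inversions w \ {b}) : IsBalancedLabeling v (X - 1) where
  toIsInversionLabeling := hX.toIsInversionLabeling.pred hb hv
  hookCount_eq c hc := by
    obtain ⟨hcw, hcb⟩ : c ∈ inversions w \ {b} := hv ▸ hc
    have hpos := hX.one_le hcw
    have : X c ≠ 1 := fun h => hcb (hX.eq_of_eq_one h hb)
    rw [← hX.hookCount_eq c hcw]
    refine congrArg _ (hookCount_congr fun e => ?_)
    simp only [rootPair_eq_self hc.1, Pi.sub_apply, Pi.one_apply]
    omega

theorem succ (hv : Function.Odd v) (hX : IsBalancedLabeling v X) {a : ℕ}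
    (ha : simplePair v a ∉ inversions v) :
    IsBalancedLabeling (sB a * v) ((inversions (sB a * v)).indicator (X + 1)) where
  toIsInversionLabeling := hX.toIsInversionLabeling.succ ha (inversions_sB_mul_of_notMem hv ha)
  hookCount_eq c hc := by
    have hinv := inversions_sB_mul_of_notMem hv ha
    have hY := hX.toIsInversionLabeling.succ ha hinv
    have hYc : (inversions (sB a * v)).indicator (X + 1) c = X c + 1 := Set.indicator_of_mem hc _
    by_cases hca : c = simplePair v a
    · have hw : Function.Odd (sB a * v : Equiv.Perm ℤ) := odd_mul (sB_odd a) hv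
      have hadj : (sB a * v) c.1 = (sB a * v) c.2 + 1 := by
        have hlt := hc.2
        have hsimple := (eq_simplePair_iff hw hc.1).1 (hca.trans (simplePair_sB_mul hv a).symm)
        unfold IsSimpleUpToSign at hsimple
        omega
      rw [hY.hookCount_of_eq_one hw (by rw [hYc, hca, hX.eq_zero _ ha]),
        Finset.filter_false_of_mem fun k _ => by omega, Int.card_Ioo, Finset.card_empty]
      have := hc.1.2
      omega
    · have hcv : c ∈ inversions v :=
        Set.mem_of_mem_insert_of_ne (a := simplePair v a) (hinv ▸ hc) hca
      rw [← hX.hookCount_eq c hcv]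
      refine congrArg _ (hookCount_congr fun e => ?_)
      have hpos := hX.one_le hcv
      rw [rootPair_eq_self hc.1, hYc]
      by_cases he : e ∈ inversions (sB a * v)
      · rw [Set.indicator_of_mem he, Pi.add_apply, Pi.one_apply]
        omega
      · rw [Set.indicator_of_notMem he,
          hX.eq_zero e fun h => he (hinv ▸ Set.mem_insert_of_mem _ h)]
        omega

end IsBalancedLabeling

end Labeling

/-! ### Reduced words as balanced labelings -/

section WordLabeling

variable {n : ℕ} {w : Equiv.Perm ℤ} {L : List ℕ} {a : ℕ}

/-- The labeling of the inversions of `wordProd L` recording the order in which `L` creates them: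
the first letter of `L` acts last, and the inversion that it creates has the label `1`. -/
noncomputable def wordLabeling : List ℕ → ℤ × ℤ → ℕ
  | [] => 0
  | a :: L => (inversions (wordProd (a :: L))).indicator (wordLabeling L + 1)

theorem IsReducedWord.isBalancedLabeling (h : IsReducedWord n w L) :
    IsBalancedLabeling w (wordLabeling L) := by
  obtain rfl : wordProd L = w := h.2.1
  induction L with
  | nil =>
    rw [wordProd_nil]
    refine ⟨⟨?_, fun b _ => rfl⟩, ?_⟩ <;> simp [inversions_one]
  | cons a L ih =>
    obtain ⟨hL, ha⟩ := h.tail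
    unfold wordLabeling
    rw [wordProd_cons]
    exact (ih hL).succ (wordProd_odd L) ha

theorem IsReducedWord.wordLabeling_cons_sub_one (h : IsReducedWord n w (a :: L)) :
    wordLabeling (a :: L) - 1 = wordLabeling L := by
  obtain ⟨hL, ha⟩ := h.tail
  have hinv := inversions_sB_mul_of_notMem (wordProd_odd L) ha
  funext c
  by_cases hc : c ∈ inversions (wordProd (a :: L))
  · simp [wordLabeling, hc]
  · have hcL : c ∉ inversions (wordProd L) := fun hcL => hc (by
      rw [wordProd_cons, hinv]
      exact Set.mem_insert_of_mem _ hcL)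
    simp [wordLabeling, hc, hL.isBalancedLabeling.eq_zero c hcL]

theorem IsReducedWord.wordLabeling_cons_simplePair (h : IsReducedWord n w (a :: L)) :
    wordLabeling (a :: L) (simplePair w a) = 1 := by
  obtain ⟨hL, ha⟩ := h.tail
  have hmem : simplePair (wordProd L) a ∈ inversions (wordProd (a :: L)) := by
    rw [wordProd_cons, inversions_sB_mul_of_notMem (wordProd_odd L) ha]
    exact Set.mem_insert _ _
  rw [← h.2.1, wordProd_cons, simplePair_sB_mul (wordProd_odd L)]
  simp [wordLabeling, hmem, hL.isBalancedLabeling.eq_zero _ ha]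

theorem wordLabeling_injOn (n : ℕ) (w : Equiv.Perm ℤ) :
    Set.InjOn wordLabeling {L | IsReducedWord n w L} := by
  intro L hL K hK hLK
  rw [Set.mem_ofPred_eq] at hL hK
  have hlen : L.length = K.length := hL.length_eq.trans hK.length_eq.symm
  induction L generalizing K w with
  | nil => exact (List.length_eq_zero_iff.1 hlen.symm).symm
  | cons a L ih =>
    cases K with
    | nil => simp at hlen
    | cons b K =>
      have hpair : simplePair w a = simplePair w b :=
        hL.isBalancedLabeling.eq_of_eq_one hL.wordLabeling_cons_simplePair
          (hLK ▸ hK.wordLabeling_cons_simplePair)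
      obtain rfl : a = b := simplePair_injective hL.isSignedPerm.odd hpair
      have hprod : wordProd L = wordProd K := by
        have := hL.2.1.trans hK.2.1.symm
        rwa [wordProd_cons, wordProd_cons, mul_right_inj] at this
      have hlabel : wordLabeling L = wordLabeling K := by
        rw [← hL.wordLabeling_cons_sub_one, hLK, hK.wordLabeling_cons_sub_one]
      rw [ih (wordProd L) hL.tail.1 (hprod ▸ hK.tail.1) hlabel (Nat.succ.inj hlen)]

theorem IsBalancedLabeling.exists_wordLabeling_eq {X : ℤ × ℤ → ℕ} (hw : IsSignedPerm n w)
    (hX : IsBalancedLabeling w X) : ∃ L, IsReducedWord n w L ∧ wordLabeling L = X := by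
  induction hm : (inversions w).ncard generalizing w X with
  | zero =>
    have hempty : inversions w = ∅ := (Set.ncard_eq_zero hX.finite_inversions).1 hm
    obtain rfl : w = 1 :=
      inversions_injOn_odd hw.odd (isSignedPerm_one n).odd (hempty.trans inversions_one.symm)
    exact ⟨[], isReducedWord_nil n, funext fun b => (hX.eq_zero b (by simp [hempty])).symm⟩
  | succ m ih =>
    obtain ⟨b, hbw, hb⟩ := hX.bijOn.surjOn (show 1 ∈ Set.Icc 1 (inversions w).ncard by simp [hm])
    obtain ⟨a, rfl⟩ := exists_simplePair_eq hw.odd hbw.1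
      (Or.inr (hX.apply_eq_add_one hw.odd hb))
    have ha : a < n := lt_of_simplePair_snd_le hw (inversions_snd_le hw hbw)
    have hinv := inversions_sB_mul_of_mem hw.odd hbw
    obtain ⟨L, hL, hLX⟩ := ih ((isSignedPerm_sB ha).mul hw) (hX.pred hb hinv)
      (by rw [hinv, Set.ncard_sdiff_singleton_of_mem hbw, hm, Nat.add_sub_cancel])
    have hcons := hL.cons ha (by
      rw [simplePair_sB_mul hw.odd, hinv]
      exact fun h => h.2 rfl)
    rw [← mul_assoc, sB_mul_self, one_mul] at hcons
    refine ⟨a :: L, hcons, funext fun c => ?_⟩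
    rw [wordLabeling, hcons.2.1, hLX]
    by_cases hc : c ∈ inversions w
    · have hpos := hX.one_le hc
      simp [hc, Nat.sub_add_cancel hpos]
    · simp [hc, hX.eq_zero c hc]

end WordLabeling

/-! ### Prescribed suffixes -/

/-- `LabelsRows X N [q₁, …, qₘ]`: the label `N + i` is placed in row `qᵢ`, the row of a pair being
its second entry. -/
def LabelsRows (X : ℤ × ℤ → ℕ) : ℕ → List ℤ → Prop
  | _, [] => True
  | N, q :: Q => (∃ b, b.2 = q ∧ X b = N + 1) ∧ LabelsRows X (N + 1) Q

/-- A list of letters, each with a row, in which every letter is the unique one that extends the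
reduced word after it by an inversion in the given row. -/
def IsRowForcing : List (ℕ × ℤ) → Prop
  | [] => True
  | (c, q) :: A => IsRowForcing A ∧
      simplePair (wordProd (A.map Prod.fst)) c ∉ inversions (wordProd (A.map Prod.fst)) ∧
      ∀ a, simplePair (wordProd (A.map Prod.fst)) a ∉ inversions (wordProd (A.map Prod.fst)) →
        ((simplePair (wordProd (A.map Prod.fst)) a).2 = q ↔ a = c)

section Suffix

variable {n N : ℕ} {w : Equiv.Perm ℤ} {L P S : List ℕ} {A : List (ℕ × ℤ)}

theorem IsReducedWord.of_append (h : IsReducedWord n w (P ++ S)) :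
    IsReducedWord n (wordProd S) S := by
  induction P generalizing w with
  | nil => exact h.2.1 ▸ h
  | cons a P ih => exact ih h.tail.1

theorem IsReducedWord.wordLabeling_append_cons {a : ℕ} (h : IsReducedWord n w (P ++ a :: S)) :
    wordLabeling (P ++ a :: S) (simplePair (wordProd S) a) = P.length + 1 := by
  induction P generalizing w with
  | nil =>
    rw [List.nil_append] at h
    rw [← simplePair_sB_mul (wordProd_odd S), ← wordProd_cons, List.nil_append, h.2.1]
    exact h.wordLabeling_cons_simplePair
  | cons b P ih =>
    rw [List.cons_append] at h ⊢
    have hsub := congrFun h.wordLabeling_cons_sub_one (simplePair (wordProd S) a)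
    rw [ih h.tail.1, Pi.sub_apply, Pi.one_apply] at hsub
    rw [List.length_cons]
    omega

theorem IsRowForcing.suffix_iff_labelsRows (hA : IsRowForcing A) (hL : IsReducedWord n w L)
    (hlen : L.length = N + A.length) :
    A.map Prod.fst <:+ L ↔ LabelsRows (wordLabeling L) N (A.map Prod.snd) := by
  induction A generalizing N with
  | nil => simp [LabelsRows]
  | cons x A ih =>
    obtain ⟨c, q⟩ := x
    obtain ⟨hA, -, hforce⟩ := hA
    rw [List.length_cons] at hlen
    replace ih := ih (N := N + 1) hA (by omega)
    simp only [List.map_cons, LabelsRows, ← ih]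
    refine ⟨fun h => ⟨?_, (List.suffix_cons _ _).trans h⟩, fun ⟨⟨b, hbq, hb⟩, h⟩ => ?_⟩
    · obtain ⟨P, rfl⟩ := h
      have hS := hL.of_append.tail.2
      refine ⟨_, (hforce c hS).2 rfl, ?_⟩
      rw [hL.wordLabeling_append_cons]
      simp only [List.length_append, List.length_cons, List.length_map] at hlen
      omega
    · obtain ⟨P, rfl⟩ := h
      obtain rfl | ⟨P, a, rfl⟩ := P.eq_nil_or_concat'
      · rw [List.nil_append, List.length_map] at hlen
        omega
      rw [List.append_assoc, List.singleton_append] at hL hlen hb ⊢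
      have hlabel := hL.wordLabeling_append_cons
      have hba : b = simplePair (wordProd (A.map Prod.fst)) a := by
        simp only [List.length_append, List.length_cons, List.length_map] at hlen
        refine hL.isBalancedLabeling.bijOn.injOn ?_ ?_ (hb.trans (by omega)) <;>
          exact hL.isBalancedLabeling.mem_inversions_iff.2 (by omega)
      obtain rfl : a = c := (hforce a hL.of_append.tail.2).1 (hba ▸ hbq)
      exact List.suffix_append _ _

theorem IsRowForcing.isReducedWord (hA : IsRowForcing A) (hn : ∀ x ∈ A, x.2 ≤ n) :
    IsReducedWord n (wordProd (A.map Prod.fst)) (A.map Prod.fst) := by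
  induction A with
  | nil => exact isReducedWord_nil n
  | cons x A ih =>
    obtain ⟨c, q⟩ := x
    obtain ⟨hA, hc, hforce⟩ := hA
    obtain ⟨hq, hn⟩ := List.forall_mem_cons.1 hn
    have hred := ih hA hn
    rw [List.map_cons, wordProd_cons]
    exact hred.cons
      (lt_of_simplePair_snd_le hred.isSignedPerm (((hforce c hc).2 rfl).trans_le hq)) hc

theorem IsRowForcing.snd_mem_of_mem_inversions (hA : IsRowForcing A) {b : ℤ × ℤ}
    (hb : b ∈ inversions (wordProd (A.map Prod.fst))) : ∃ x ∈ A, x.2 = b.2 := by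
  induction A with
  | nil => simp [wordProd_nil, inversions_one] at hb
  | cons x A ih =>
    obtain ⟨c, q⟩ := x
    obtain ⟨hA, hc, hforce⟩ := hA
    rw [List.map_cons, wordProd_cons, inversions_sB_mul_of_notMem (wordProd_odd _) hc] at hb
    rcases hb with rfl | hb
    · exact ⟨(c, q), List.mem_cons_self, ((hforce c hc).2 rfl).symm⟩
    · obtain ⟨x, hx, hxb⟩ := ih hA hb
      exact ⟨x, List.mem_cons_of_mem _ hx, hxb⟩

theorem IsRowForcing.bijOn_wordLabeling_append (hA : IsRowForcing A) (hn : ∀ x ∈ A, x.2 ≤ n)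
    (hw : IsSignedPerm n w) (hsub : inversions (wordProd (A.map Prod.fst)) ⊆ inversions w)
    (hN : (inversions w).ncard = N + A.length) :
    Set.BijOn (fun L => wordLabeling (L ++ A.map Prod.fst))
      {L | IsReducedWord n (w * (wordProd (A.map Prod.fst))⁻¹) L}
      {X | IsBalancedLabeling w X ∧ LabelsRows X N (A.map Prod.snd)} := by
  have hred (L : List ℕ) : IsReducedWord n w (L ++ A.map Prod.fst) ↔
      IsReducedWord n (w * (wordProd (A.map Prod.fst))⁻¹) L :=
    isReducedWord_append_iff (hA.isReducedWord hn) hw hsub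
  have hrows {L : List ℕ} (hL : IsReducedWord n w L) :
      A.map Prod.fst <:+ L ↔ LabelsRows (wordLabeling L) N (A.map Prod.snd) :=
    hA.suffix_iff_labelsRows hL (hL.length_eq.trans hN)
  refine ⟨fun L hL => ?_, fun L hL K hK h => ?_, fun X ⟨hX, hXN⟩ => ?_⟩
  · have hL := (hred L).2 hL
    exact ⟨hL.isBalancedLabeling, (hrows hL).1 (List.suffix_append _ _)⟩
  · exact List.append_cancel_right
      (wordLabeling_injOn n w ((hred L).2 hL) ((hred K).2 hK) h)
  · obtain ⟨L, hL, rfl⟩ := hX.exists_wordLabeling_eq hw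
    obtain ⟨K, rfl⟩ := (hrows hL).2 hXN
    exact ⟨K, (hred K).1 hL, rfl⟩

end Suffix

/-! ### Runs of letters and the word `a^λ` -/

/-- The increasing run of letters `q - j, …, q - 1`, all of them assigned the row `q`. -/
def rowRun (q j : ℕ) : List (ℕ × ℤ) :=
  (List.range j).map fun t => (q - j + t, (q : ℤ))

/-- The word `a^λ`, where the run `a^λ_i` is assigned the row `d + r + 1 - i`. -/
def aLamRuns (d r : ℕ) (lam : ℕ → ℕ) : List (ℕ × ℤ) :=
  (List.range d).flatMap fun k => rowRun (d + r - k) (muF d r lam (k + 1))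

section Runs

variable {X : ℤ × ℤ → ℕ} {N : ℕ} {A : List (ℕ × ℤ)}

theorem IsRowForcing.cons {c q : ℕ} (hA : IsRowForcing A) (hrow : ∀ x ∈ A, x.2 ≤ q)
    (hq : wordProd (A.map Prod.fst) q = c + 1) : IsRowForcing ((c, (q : ℤ)) :: A) := by
  set v := wordProd (A.map Prod.fst) with hv
  have hodd : Function.Odd v := wordProd_odd _
  have hfix : ∀ x : ℤ, q < |x| → v x = x := (hA.isReducedWord hrow).isSignedPerm.2
  obtain ⟨p, hp⟩ := v.surjective c
  have hpq : -(q : ℤ) < p ∧ p < q := by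
    have hneg := hodd q
    have hfixp := hfix p
    have hne : p ≠ q := by rintro rfl; omega
    have hne' : p ≠ -q := by rintro rfl; omega
    have hsucc : (q : ℤ) < |(c : ℤ) + 1| → (q : ℤ) = c + 1 := fun h =>
      v.injective (hq.trans (hfix _ h).symm)
    grind
  have hpair : simplePair v c = ((p, q) : ℤ × ℤ) :=
    ((eq_simplePair_iff hodd (b := (p, (q : ℤ))) hpq).2 (Or.inl ⟨hp, hq⟩)).symm
  refine ⟨hA, ?_, fun a ha => ⟨fun haq => ?_, ?_⟩⟩
  · rw [← hv, hpair, mem_inversions]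
    omega
  · have hle : v (simplePair v a).1 ≤ v (simplePair v a).2 :=
      not_lt.1 fun h => ha ⟨simplePair_mem_posPairs v a, h⟩
    have hsimple := (eq_simplePair_iff hodd (simplePair_mem_posPairs v a)).1 rfl
    rw [haq, hq] at hle hsimple
    unfold IsSimpleUpToSign at hsimple
    omega
  · rintro rfl
    rw [hpair]

theorem rowRun_succ {q j : ℕ} (h : j < q) :
    rowRun q (j + 1) = (q - (j + 1), (q : ℤ)) :: rowRun q j := by
  rw [rowRun, List.range_succ_eq_map, List.map_cons, List.map_map]
  refine congrArg _ (List.map_congr_left fun t _ => ?_)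
  simp only [Function.comp_apply, Prod.mk.injEq, and_true]
  omega

theorem snd_of_mem_rowRun {q j : ℕ} {x : ℕ × ℤ} (hx : x ∈ rowRun q j) : x.2 = q := by
  obtain ⟨t, -, rfl⟩ := List.mem_map.1 hx
  rfl

theorem IsRowForcing.rowRun_append {q j : ℕ} (hA : IsRowForcing A) (hrow : ∀ x ∈ A, x.2 < q)
    (hj : j < q) : IsRowForcing (rowRun q j ++ A) := by
  suffices IsRowForcing (rowRun q j ++ A) ∧
      wordProd ((rowRun q j ++ A).map Prod.fst) q = (q : ℤ) - j from this.1
  induction j with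
  | zero =>
    have hred := hA.isReducedWord (n := q - 1) fun x hx => by
      have := hrow x hx
      omega
    refine ⟨hA, ?_⟩
    rw [Nat.cast_zero, sub_zero]
    exact hred.isSignedPerm.2 q (by rw [Nat.abs_cast]; omega)
  | succ j ih =>
    obtain ⟨hforce, hval⟩ := ih (by omega)
    rw [rowRun_succ (by omega), List.cons_append, List.map_cons, wordProd_cons,
      Equiv.Perm.mul_apply, hval]
    refine ⟨hforce.cons (fun x hx => ?_) (by omega), ?_⟩
    · rcases List.mem_append.1 hx with hx | hx
      · exact (snd_of_mem_rowRun hx).le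
      · exact (hrow x hx).le
    · rw [sB_apply]
      split_ifs <;> omega

theorem isRowForcing_flatMap_rowRun {ι : Type*} {K : List ι} {q m : ι → ℕ}
    (hK : K.Pairwise fun k l => q l < q k) (hm : ∀ k ∈ K, m k < q k) :
    IsRowForcing (K.flatMap fun k => rowRun (q k) (m k)) := by
  induction K with
  | nil => trivial
  | cons k K ih =>
    obtain ⟨hk, hK⟩ := List.pairwise_cons.1 hK
    obtain ⟨hmk, hm⟩ := List.forall_mem_cons.1 hm
    rw [List.flatMap_cons]
    refine (ih hK hm).rowRun_append (fun x hx => ?_) hmk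
    obtain ⟨l, hl, hx⟩ := List.mem_flatMap.1 hx
    rw [snd_of_mem_rowRun hx]
    exact_mod_cast hk l hl

theorem labelsRows_append (Q R : List ℤ) :
    LabelsRows X N (Q ++ R) ↔ LabelsRows X N Q ∧ LabelsRows X (N + Q.length) R := by
  induction Q generalizing N with
  | nil => simp [LabelsRows]
  | cons q Q ih =>
    rw [List.cons_append, LabelsRows, LabelsRows, ih, and_assoc, List.length_cons, add_right_comm,
      add_assoc]

theorem labelsRows_replicate (m : ℕ) (q : ℤ) :
    LabelsRows X N (List.replicate m q) ↔
      ∀ k, N + 1 ≤ k → k ≤ N + m → ∃ b, b.2 = q ∧ X b = k := by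
  induction m generalizing N with
  | zero => exact iff_of_true trivial fun k hk hk' => by omega
  | succ m ih =>
    rw [List.replicate_succ, LabelsRows, ih]
    refine ⟨fun ⟨h, hrest⟩ k hk hk' => ?_, fun h => ⟨h _ le_rfl (by omega), fun k hk hk' =>
      h k (by omega) (by omega)⟩⟩
    obtain rfl | hlt := hk.eq_or_lt
    · exact h
    · exact hrest k hlt (by omega)

theorem labelsRows_flatMap_replicate (m : ℕ → ℕ) (q : ℕ → ℤ) (d : ℕ) :
    LabelsRows X N ((List.range d).flatMap fun i => List.replicate (m i) (q i)) ↔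
      ∀ i < d, ∀ k, N + ∑ t ∈ Finset.range i, m t + 1 ≤ k →
        k ≤ N + ∑ t ∈ Finset.range (i + 1), m t → ∃ b, b.2 = q i ∧ X b = k := by
  induction d with
  | zero => simp [LabelsRows]
  | succ d ih =>
    have hlen : ((List.range d).flatMap fun i => List.replicate (m i) (q i)).length =
        ∑ t ∈ Finset.range d, m t := by
      simp only [List.length_flatMap, List.length_replicate]
      rfl
    rw [List.range_succ, List.flatMap_append, labelsRows_append, ih, List.flatMap_singleton,
      labelsRows_replicate, hlen, Nat.forall_lt_succ_right, Finset.sum_range_succ _ d, ← add_assoc]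

end Runs

section ALam

variable {d r : ℕ} {lam : ℕ → ℕ}

theorem muF_lt (hlow : ∀ i : ℕ, 1 ≤ i → i ≤ d → d + 1 ≤ lam i + i) {k : ℕ} (hk : k < d) :
    muF d r lam (k + 1) < d + r - k := by
  have := hlow (k + 1) (by omega) hk
  rw [muF]
  omega

theorem isRowForcing_aLamRuns (hlow : ∀ i : ℕ, 1 ≤ i → i ≤ d → d + 1 ≤ lam i + i) :
    IsRowForcing (aLamRuns d r lam) :=
  isRowForcing_flatMap_rowRun
    (List.pairwise_lt_range.imp_of_mem fun _ hl h => by rw [List.mem_range] at hl; omega)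
    fun _ hk => muF_lt hlow (List.mem_range.1 hk)

theorem map_fst_aLamRuns (hlow : ∀ i : ℕ, 1 ≤ i → i ≤ d → d + 1 ≤ lam i + i) :
    (aLamRuns d r lam).map Prod.fst = aLamWord d r lam := by
  rw [aLamRuns, aLamWord, List.map_flatMap]
  refine List.flatMap_congr fun k hk => ?_
  have := muF_lt (r := r) hlow (List.mem_range.1 hk)
  rw [rowRun, List.map_map]
  refine List.map_congr_left fun t _ => ?_
  rw [Function.comp_apply]
  omega

theorem map_snd_aLamRuns : (aLamRuns d r lam).map Prod.snd =
    (List.range d).flatMap fun k => List.replicate (muF d r lam (k + 1)) ((d + r - k : ℕ) : ℤ) := by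
  simp [aLamRuns, rowRun, List.map_flatMap, Function.comp_def]

theorem sigmaF_eq_sum_range (i : ℕ) :
    sigmaF d r lam i = ∑ k ∈ Finset.range i, muF d r lam (k + 1) := by
  rw [sigmaF, Finset.range_eq_Ico, Finset.sum_Ico_add']
  rfl

theorem length_aLamRuns : (aLamRuns d r lam).length = sigmaF d r lam d := by
  rw [sigmaF_eq_sum_range, ← List.length_map Prod.snd, map_snd_aLamRuns, List.length_flatMap]
  simp only [List.length_replicate]
  rfl

theorem lt_snd_of_mem_aLamRuns {x : ℕ × ℤ} (hx : x ∈ aLamRuns d r lam) :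
    (r : ℤ) < x.2 ∧ x.2 ≤ d + r := by
  obtain ⟨k, hk, hx⟩ := List.mem_flatMap.1 hx
  rw [snd_of_mem_rowRun hx]
  rw [List.mem_range] at hk
  omega

theorem pos_of_mem_aLamWord (hlow : ∀ i : ℕ, 1 ≤ i → i ≤ d → d + 1 ≤ lam i + i) {a : ℕ}
    (ha : a ∈ aLamWord d r lam) : 0 < a := by
  rw [← map_fst_aLamRuns hlow] at ha
  obtain ⟨x, hx, rfl⟩ := List.mem_map.1 ha
  obtain ⟨k, hk, hx⟩ := List.mem_flatMap.1 hx
  obtain ⟨t, -, rfl⟩ := List.mem_map.1 hx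
  have := muF_lt (r := r) hlow (List.mem_range.1 hk)
  dsimp only
  omega

theorem labelsRows_aLamRuns_iff {X : ℤ × ℤ → ℕ} {N : ℕ} :
    LabelsRows X N ((aLamRuns d r lam).map Prod.snd) ↔
      ∀ i : ℕ, 1 ≤ i → i ≤ d → ∀ k : ℕ, N + sigmaF d r lam (i - 1) + 1 ≤ k →
        k ≤ N + sigmaF d r lam i → ∃ b : ℤ × ℤ, b.2 = d + r + 1 - i ∧ X b = k := by
  simp only [map_snd_aLamRuns, labelsRows_flatMap_replicate, ← sigmaF_eq_sum_range]
  have hrow {k : ℕ} (hk : k < d) : ((d + r - k : ℕ) : ℤ) = d + r + 1 - (k + 1 : ℕ) := by omega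
  refine ⟨fun h i hi hid => ?_, fun h k hk => ?_⟩
  · obtain ⟨k, rfl⟩ := Nat.exists_eq_add_of_le' hi
    exact hrow hid ▸ h k hid
  · exact hrow hk ▸ h (k + 1) (by omega) hk

theorem sizeP_add_sigmaF (hsub : ∀ i : ℕ, 1 ≤ i → i ≤ d → lam i ≤ Zlam d r i) :
    sizeP d lam + sigmaF d r lam d = sizeP d (Zlam d r) := by
  rw [sizeP, sigmaF, sizeP, ← Finset.sum_add_distrib]
  refine Finset.sum_congr rfl fun i hi => ?_
  rw [Finset.mem_Icc] at hi
  exact Nat.add_sub_cancel' (hsub i hi.1 hi.2)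

end ALam

/-! ### Boxes of the trapezoid as inversions -/

/-- The inversion of `w^{(d,r)}` attached to the box `(i, c)` of `Z(d,r)`. -/
def boxPair (d r : ℕ) (b : ℤ × ℤ) : ℤ × ℤ :=
  (if 0 ≤ b.2 then b.2 else b.2 - r, d + r + 1 - b.1)

/-- The column of the boxes whose inversion has first entry `p`. -/
def boxCol (r : ℕ) (p : ℤ) : ℤ := if 0 ≤ p then p else p + r

/-- The extension of `boxPair` to the extended diagram: the additional box `(i, i - d - 1)` shares
the inversion of `(i, 0)`. -/
def extBoxPair (d r : ℕ) (b : ℤ × ℤ) : ℤ × ℤ :=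
  boxPair d r (if b.2 = b.1 - (d + 1) then (b.1, 0) else b)

/-- The boxes to the right of `(i, c)`. -/
def Arm (d : ℕ) (lam : ℕ → ℕ) (i c : ℤ) : Set (ℤ × ℤ) :=
  {b ∈ Diagram d lam | b.1 = i ∧ c < b.2}

/-- The boxes of the extended hook of `(i, c)` outside row `i`. -/
def Leg (d : ℕ) (lam : ℕ → ℕ) (i c : ℤ) : Set (ℤ × ℤ) :=
  {b | b ∈ Diagram d lam ∧ (b.2 = c ∧ i < b.1 ∨ c < 0 ∧ b.1 = d + 1 + c) ∨
    c < 0 ∧ b = ((d : ℤ) + 1 + c, c)}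

theorem extHook_eq (d : ℕ) (lam : ℕ → ℕ) (i c : ℤ) :
    ExtHook d lam i c = insert (i, c) (Arm d lam i c ∪ Leg d lam i c) := by
  ext b
  simp only [ExtHook, Hook, Arm, Leg, Set.mem_union, Set.mem_insert_iff, Set.mem_singleton_iff,
    Set.mem_ofPred_eq]
  tauto

theorem extFilling_comp_boxPair (d r : ℕ) (X : ℤ × ℤ → ℕ) :
    ExtFilling d (X ∘ boxPair d r) = X ∘ extBoxPair d r := by
  ext b
  simp only [ExtFilling, extBoxPair, Function.comp_apply]
  split_ifs <;> rfl

theorem ncard_diagram (d : ℕ) (lam : ℕ → ℕ) : (Diagram d lam).ncard = sizeP d lam := by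
  have hdiag : Diagram d lam =
      ((Finset.Icc 1 d).biUnion fun i : ℕ =>
        {(i : ℤ)} ×ˢ Finset.Ico ((i : ℤ) - d) (lam i + i - d) : Finset (ℤ × ℤ)) := by
    ext ⟨i, c⟩
    simp only [Diagram, Set.mem_ofPred_eq, Finset.coe_biUnion, Set.mem_iUnion, Finset.mem_coe,
      Finset.mem_product, Finset.mem_singleton, Finset.mem_Icc, Finset.mem_Ico, exists_prop]
    refine ⟨fun h => ⟨i.toNat, by omega, by omega, by omega, by omega⟩, ?_⟩
    rintro ⟨j, hj, rfl, hc⟩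
    rw [Int.toNat_natCast]
    omega
  rw [hdiag, Set.ncard_coe_finset, Finset.card_biUnion, sizeP]
  · refine Finset.sum_congr rfl fun i _ => ?_
    rw [Finset.card_product, Finset.card_singleton, Int.card_Ico]
    omega
  · refine fun i _ j _ hij => Finset.disjoint_left.2 fun b hi hj => hij ?_
    rw [Finset.mem_product, Finset.mem_singleton] at hi hj
    exact_mod_cast hi.1.symm.trans hj.1

theorem encard_setOf_lt {α β γ : Type*} {F : Finset α} {f : α → β} {g : α → γ} {e : β → γ}
    {B : Set β} {V : Set γ} {X : γ → ℕ} (hf : Set.BijOn f {k ∈ (F : Set α) | g k ∈ V} B)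
    (he : ∀ k ∈ F, g k ∈ V → e (f k) = g k) (hX : ∀ z ∉ V, X z = 0) (m : ℕ) :
    {b ∈ B | m < X (e b)}.encard = (F.filter fun k => m < X (g k)).card := by
  have hV {z : γ} (h : m < X z) : z ∈ V := by
    by_contra hz
    rw [hX z hz] at h
    omega
  have himage : {b ∈ B | m < X (e b)} = f '' ↑(F.filter fun k => m < X (g k)) := by
    rw [← hf.image_eq]
    ext b
    simp only [Set.mem_ofPred_eq, Set.mem_image, Finset.coe_filter]
    constructor
    · rintro ⟨⟨k, ⟨hk, hkV⟩, rfl⟩, hm⟩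
      exact ⟨k, ⟨hk, he k hk hkV ▸ hm⟩, rfl⟩
    · rintro ⟨k, ⟨hk, hm⟩, rfl⟩
      exact ⟨⟨k, ⟨hk, hV hm⟩, rfl⟩, (he k hk (hV hm)).symm ▸ hm⟩
  rw [himage, Set.InjOn.encard_image, Set.encard_coe_eq_coe_finsetCard]
  refine hf.injOn.mono fun k hk => ?_
  rw [Finset.mem_coe, Finset.mem_filter] at hk
  exact ⟨hk.1, hV hk.2⟩

section Trapezoid

variable {d r : ℕ} {w : Equiv.Perm ℤ} {X : ℤ × ℤ → ℕ}

theorem mem_diagram_Zlam {i c : ℤ} : (i, c) ∈ Diagram d (Zlam d r) ↔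
    1 ≤ i ∧ i ≤ d ∧ i - d ≤ c ∧ c ≤ r + d - i := by
  simp only [Diagram, Zlam, Set.mem_ofPred_eq]
  omega

theorem IsWdr.mem_inversions_iff (hw : IsWdr d r w) {p q : ℤ} : (p, q) ∈ inversions w ↔
    -q < p ∧ p < q ∧ r < q ∧ q ≤ d + r ∧ (0 ≤ p ∨ p < -r) := by
  obtain ⟨hsigned, hsmall, hlarge⟩ := hw
  rw [mem_inversions]
  by_cases hpq : -q < p ∧ p < q
  swap
  · exact iff_of_false (fun h => hpq h.1) fun h => hpq ⟨h.1, h.2.1⟩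
  have h0 : w 0 = 0 := hsigned.odd.map_zero
  have hfix (x : ℤ) (hx : d + r < x) : w x = x := hsigned.2 x (by grind)
  have hq := hfix q
  have hq1 := hsmall q
  have hq2 := hlarge q
  have hp := hfix p
  have hp1 := hsmall p
  have hp2 := hlarge p
  have hneg := hsigned.1 p
  have hn := hfix (-p)
  have hn1 := hsmall (-p)
  have hn2 := hlarge (-p)
  rcases lt_trichotomy p 0 with h | rfl | h
  all_goals omega

theorem boxPair_mem_inversions_iff (hw : IsWdr d r w) {b : ℤ × ℤ} :
    boxPair d r b ∈ inversions w ↔ b ∈ Diagram d (Zlam d r) := by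
  obtain ⟨i, c⟩ := b
  rw [mem_diagram_Zlam, boxPair, hw.mem_inversions_iff]
  split_ifs <;> omega

theorem boxPair_injective : Function.Injective (boxPair d r) := by
  rintro ⟨i, c⟩ ⟨j, e⟩ h
  simp only [boxPair, Prod.mk.injEq] at h ⊢
  split_ifs at h <;> omega

theorem boxPair_bijOn (hw : IsWdr d r w) :
    Set.BijOn (boxPair d r) (Diagram d (Zlam d r)) (inversions w) := by
  refine ⟨fun b => (boxPair_mem_inversions_iff hw).2, boxPair_injective.injOn, ?_⟩
  rintro ⟨p, q⟩ hb
  rw [hw.mem_inversions_iff] at hb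
  refine ⟨(d + r + 1 - q, boxCol r p), mem_diagram_Zlam.2 ?_, ?_⟩ <;> simp only [boxCol, boxPair]
  · split_ifs <;> omega
  · grind

section Hook

variable {i c p q : ℤ}

theorem rootPair_right_mem_inversions_iff (hw : IsWdr d r w) (hb : (p, q) ∈ inversions w) {k : ℤ} :
    k ∈ Set.Ioo p q ∧ rootPair k q ∈ inversions w ↔ p < k ∧ k < q ∧ (0 ≤ k ∨ k < -r) := by
  grind [rootPair, hw.mem_inversions_iff]

theorem rootPair_left_mem_inversions_iff (hw : IsWdr d r w) (hb : (p, q) ∈ inversions w) {k : ℤ} :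
    k ∈ Set.Ioo p q ∧ rootPair p k ∈ inversions w ↔ p < k ∧ k < q ∧ (k ≤ 0 ∨ r < k) := by
  grind [rootPair, hw.mem_inversions_iff]

theorem arm_bijOn (hw : IsWdr d r w) (hb : (p, q) ∈ inversions w)
    (hpq : boxPair d r (i, c) = (p, q)) :
    Set.BijOn (fun k => (i, boxCol r k)) {k ∈ Set.Ioo p q | rootPair k q ∈ inversions w}
      (Arm d (Zlam d r) i c) := by
  simp only [rootPair_right_mem_inversions_iff hw hb]
  rw [hw.mem_inversions_iff] at hb
  simp only [boxPair, Prod.mk.injEq] at hpq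
  refine ⟨fun k hk => ⟨mem_diagram_Zlam.2 ?_, rfl, ?_⟩, fun k hk l hl h => ?_, ?_⟩
  · grind [boxCol]
  · grind [boxCol]
  · grind [boxCol]
  · rintro ⟨j, e⟩ ⟨he, rfl, hce⟩
    rw [mem_diagram_Zlam] at he
    refine ⟨(boxPair d r (j, e)).1, ?_, ?_⟩
    · grind [boxPair]
    · grind [boxPair, boxCol]

theorem extBoxPair_of_arm (hw : IsWdr d r w) (hb : (p, q) ∈ inversions w)
    (hpq : boxPair d r (i, c) = (p, q)) {k : ℤ} (hk : k ∈ Set.Ioo p q)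
    (h : rootPair k q ∈ inversions w) : extBoxPair d r (i, boxCol r k) = rootPair k q := by
  have hmem := (rootPair_right_mem_inversions_iff hw hb).1 ⟨hk, h⟩
  grind [rootPair, extBoxPair, boxPair, boxCol, hw.mem_inversions_iff]

/-- The box of the leg of `(i, c)` attached to the root `(p, k)`, where `p` is the first entry of
the inversion of `(i, c)`. -/
def legBox (d r : ℕ) (p k : ℤ) : ℤ × ℤ :=
  if -p ≤ k then (d + r + 1 - k, boxCol r p) else (d + r + 1 + p, boxCol r (-k))

theorem mem_leg_Zlam {j e : ℤ} : (j, e) ∈ Leg d (Zlam d r) i c ↔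
    (1 ≤ j ∧ j ≤ d ∧ j - d ≤ e ∧ e ≤ r + d - j) ∧ (e = c ∧ i < j ∨ c < 0 ∧ j = d + 1 + c) ∨
      c < 0 ∧ j = d + 1 + c ∧ e = c := by
  rw [← mem_diagram_Zlam, ← Prod.mk.injEq]
  rfl

theorem leg_bijOn (hw : IsWdr d r w) (hb : (p, q) ∈ inversions w)
    (hpq : boxPair d r (i, c) = (p, q)) :
    Set.BijOn (legBox d r p) {k ∈ Set.Ioo p q | rootPair p k ∈ inversions w}
      (Leg d (Zlam d r) i c) := by
  simp only [rootPair_left_mem_inversions_iff hw hb]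
  rw [hw.mem_inversions_iff] at hb
  simp only [boxPair, Prod.mk.injEq] at hpq
  refine ⟨fun k (hk : _ ∧ _ ∧ _) => ?_, fun k (hk : _ ∧ _ ∧ _) l (hl : _ ∧ _ ∧ _) h => ?_, ?_⟩
  · unfold legBox boxCol
    split_ifs <;> rw [mem_leg_Zlam] <;> grind
  · unfold legBox boxCol at h
    split_ifs at h <;> rw [Prod.mk.injEq] at h <;> omega
  · rintro ⟨j, e⟩ h
    rw [mem_leg_Zlam] at h
    refine ⟨if c < 0 ∧ j = d + 1 + c ∧ e ≠ c then -(boxPair d r (j, e)).1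
      else d + r + 1 - j, ?_, ?_⟩
    · simp only [Set.mem_ofPred_eq, boxPair]
      split_ifs <;> omega
    · grind [boxCol, boxPair, legBox]

theorem extBoxPair_of_leg (hw : IsWdr d r w) (hb : (p, q) ∈ inversions w)
    {k : ℤ} (hk : k ∈ Set.Ioo p q)
    (h : rootPair p k ∈ inversions w) : extBoxPair d r (legBox d r p k) = rootPair p k := by
  have hmem := (rootPair_left_mem_inversions_iff hw hb).1 ⟨hk, h⟩
  grind [rootPair, extBoxPair, boxPair, boxCol, hw.mem_inversions_iff, legBox]

theorem disjoint_arm_leg (hic : (i, c) ∈ Diagram d (Zlam d r)) :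
    Disjoint (Arm d (Zlam d r) i c) (Leg d (Zlam d r) i c) := by
  rw [mem_diagram_Zlam] at hic
  refine Set.disjoint_left.2 fun ⟨j, e⟩ harm hleg => ?_
  obtain ⟨-, rfl, -⟩ := harm
  rw [mem_leg_Zlam] at hleg
  omega

theorem extBoxPair_eq_boxPair (h : (i, c) ∈ Diagram d (Zlam d r)) :
    extBoxPair d r (i, c) = boxPair d r (i, c) := by
  rw [mem_diagram_Zlam] at h
  rw [extBoxPair, if_neg]
  dsimp only
  omega

theorem ncard_extHook_lt (hw : IsWdr d r w) (hX : ∀ z ∉ inversions w, X z = 0)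
    (hic : (i, c) ∈ Diagram d (Zlam d r)) (hpq : boxPair d r (i, c) = (p, q)) :
    {b ∈ ExtHook d (Zlam d r) i c | X (p, q) < X (extBoxPair d r b)}.ncard = hookCount X p q := by
  have hb : (p, q) ∈ inversions w := hpq ▸ (boxPair_mem_inversions_iff hw).2 hic
  have hsplit : {b ∈ ExtHook d (Zlam d r) i c | X (p, q) < X (extBoxPair d r b)} =
      {b ∈ Arm d (Zlam d r) i c | X (p, q) < X (extBoxPair d r b)} ∪
        {b ∈ Leg d (Zlam d r) i c | X (p, q) < X (extBoxPair d r b)} := by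
    ext b
    have hne : b = (i, c) → ¬X (p, q) < X (extBoxPair d r b) := by
      rintro rfl
      rw [extBoxPair_eq_boxPair hic, hpq]
      exact lt_irrefl _
    simp only [extHook_eq, Set.mem_ofPred_eq, Set.mem_insert_iff, Set.mem_union]
    tauto
  have harm := encard_setOf_lt (F := Finset.Ioo p q)
    (by rw [Finset.coe_Ioo]; exact arm_bijOn hw hb hpq)
    (fun k hk => extBoxPair_of_arm hw hb hpq (Finset.mem_Ioo.1 hk)) hX (X (p, q))
  have hleg := encard_setOf_lt (F := Finset.Ioo p q)
    (by rw [Finset.coe_Ioo]; exact leg_bijOn hw hb hpq)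
    (fun k hk => extBoxPair_of_leg hw hb (Finset.mem_Ioo.1 hk)) hX (X (p, q))
  rw [Set.ncard, hsplit, Set.encard_union_eq, harm, hleg, hookCount, rootPair_eq_self hb.1,
    add_comm]
  · rfl
  · exact (disjoint_arm_leg hic).mono (Set.sep_subset _ _) (Set.sep_subset _ _)

end Hook

end Trapezoid

/-! ### Balanced tableaux of the trapezoid as balanced labelings -/

section Transfer

variable {d r : ℕ} {w : Equiv.Perm ℤ} {lam : ℕ → ℕ} {X : ℤ × ℤ → ℕ}

theorem rk_Zlam {i c : ℤ} (h : (i, c) ∈ Diagram d (Zlam d r)) :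
    rk d (Zlam d r) i c = (boxPair d r (i, c)).2 - (boxPair d r (i, c)).1 := by
  rw [mem_diagram_Zlam] at h
  unfold rk Zlam boxPair
  split_ifs <;> omega

theorem ncard_inversions_wdr (hw : IsWdr d r w) :
    (inversions w).ncard = sizeP d (Zlam d r) := by
  rw [← ncard_diagram, (boxPair_bijOn hw).ncard_eq]

theorem isFilling_comp_boxPair_iff (hw : IsWdr d r w) (hX : ∀ b ∉ inversions w, X b = 0) :
    IsFilling d (Zlam d r) (X ∘ boxPair d r) ↔ IsInversionLabeling w X := by
  rw [IsFilling, Set.bijOn_comp_iff boxPair_injective.injOn, (boxPair_bijOn hw).image_eq,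
    ← ncard_inversions_wdr hw]
  exact ⟨fun h => ⟨h.1, hX⟩,
    fun h => ⟨h.bijOn, fun b hb => hX _ (mt (boxPair_mem_inversions_iff hw).1 hb)⟩⟩

theorem isBalanced_comp_boxPair_iff (hw : IsWdr d r w) (hX : ∀ b ∉ inversions w, X b = 0) :
    IsBalanced d (Zlam d r) (X ∘ boxPair d r) ↔ IsBalancedLabeling w X := by
  rw [IsBalanced, isFilling_comp_boxPair_iff hw hX, extFilling_comp_boxPair]
  have hhook : (∀ b ∈ Diagram d (Zlam d r),
      ({a ∈ ExtHook d (Zlam d r) b.1 b.2 | (X ∘ boxPair d r) b < (X ∘ extBoxPair d r) a}.ncard : ℤ)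
        = rk d (Zlam d r) b.1 b.2 - 1) ↔
      ∀ b ∈ inversions w, (hookCount X b.1 b.2 : ℤ) = b.2 - b.1 - 1 := by
    rw [← (boxPair_bijOn hw).image_eq, Set.forall_mem_image]
    refine forall₂_congr fun b hb => ?_
    have hcount := ncard_extHook_lt (p := (boxPair d r b).1) (q := (boxPair d r b).2) hw hX hb rfl
    rw [rk_Zlam hb, ← hcount]
    rfl
  rw [hhook]
  exact ⟨fun h => ⟨h.1, h.2⟩, fun h => ⟨h.toIsInversionLabeling, h.hookCount_eq⟩⟩

theorem exists_diagram_row_iff (hw : IsWdr d r w) (hX : ∀ b ∉ inversions w, X b = 0) {k : ℕ}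
    (hk : 0 < k) (i : ℕ) :
    (∃ c : ℤ, ((i : ℤ), c) ∈ Diagram d (Zlam d r) ∧ (X ∘ boxPair d r) ((i : ℤ), c) = k) ↔
      ∃ b : ℤ × ℤ, b.2 = d + r + 1 - i ∧ X b = k := by
  refine ⟨fun ⟨c, _, h⟩ => ⟨_, rfl, h⟩, fun ⟨b, hb, h⟩ => ?_⟩
  have hinv : b ∈ inversions w := by
    by_contra hb
    exact hk.ne' (h ▸ hX b hb)
  obtain ⟨⟨j, c⟩, hjc, rfl⟩ := (boxPair_bijOn hw).surjOn hinv
  obtain rfl : j = i := by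
    rw [boxPair] at hb
    omega
  exact ⟨c, hjc, h⟩

theorem comp_boxPair_bijOn (hw : IsWdr d r w) :
    Set.BijOn (fun X => X ∘ boxPair d r)
      {X | IsBalancedLabeling w X ∧
        LabelsRows X (sizeP d lam) ((aLamRuns d r lam).map Prod.snd)}
      (BSRestricted d r lam) := by
  have hmem {X : ℤ × ℤ → ℕ} (hX : ∀ b ∉ inversions w, X b = 0) :
      X ∘ boxPair d r ∈ BSRestricted d r lam ↔ IsBalancedLabeling w X ∧
        LabelsRows X (sizeP d lam) ((aLamRuns d r lam).map Prod.snd) := by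
    rw [labelsRows_aLamRuns_iff, BSRestricted, Set.mem_ofPred_eq, isBalanced_comp_boxPair_iff hw hX]
    refine and_congr_right fun _ => forall₃_congr fun i _ _ => forall₃_congr fun k hk _ => ?_
    exact exists_diagram_row_iff hw hX (by omega) i
  refine ⟨fun X hX => (hmem hX.1.eq_zero).2 hX, fun X hX Y hY h => ?_, fun T hT => ?_⟩
  · ext b
    by_cases hb : b ∈ inversions w
    · obtain ⟨a, -, rfl⟩ := (boxPair_bijOn hw).surjOn hb
      exact congrFun h a
    · rw [hX.1.eq_zero b hb, hY.1.eq_zero b hb]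
  · have hT_eq : Function.extend (boxPair d r) T 0 ∘ boxPair d r = T :=
      funext fun b => boxPair_injective.extend_apply _ _ b
    refine ⟨_, (hmem fun b hb => ?_).1 (hT_eq.symm ▸ hT), hT_eq⟩
    by_cases hrange : ∃ a, boxPair d r a = b
    · obtain ⟨a, rfl⟩ := hrange
      rw [boxPair_injective.extend_apply]
      exact hT.1.1.2 a (mt (boxPair_mem_inversions_iff hw).2 hb)
    · exact Function.extend_apply' _ _ _ hrange

theorem inversions_wordProd_aLamWord_subset (hw : IsWdr d r w)
    (hlow : ∀ i : ℕ, 1 ≤ i → i ≤ d → d + 1 ≤ lam i + i) :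
    inversions (wordProd (aLamWord d r lam)) ⊆ inversions w := by
  rintro ⟨p, q⟩ hb
  have hpos {x : ℤ} (hx : 0 < x) : 0 < wordProd (aLamWord d r lam) x :=
    wordProd_pos (fun a => pos_of_mem_aLamWord hlow) hx
  have hodd := wordProd_odd (aLamWord d r lam)
  have hrow : (r : ℤ) < q ∧ q ≤ d + r := by
    rw [← map_fst_aLamRuns hlow] at hb
    obtain ⟨x, hx, hxq⟩ := (isRowForcing_aLamRuns hlow).snd_mem_of_mem_inversions hb
    obtain rfl : x.2 = q := hxq
    exact lt_snd_of_mem_aLamRuns hx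
  obtain ⟨hpq, hlt⟩ := mem_inversions.1 hb
  have hp : 0 ≤ p := by
    by_contra! hp
    have hneg := hpos (neg_pos.2 hp)
    have hq := hpos (x := q) (by omega)
    rw [hodd] at hneg
    omega
  rw [hw.mem_inversions_iff]
  omega

end Transfer

theorem IsStrictPartition.add_one_le_apply_add {d : ℕ} {lam : ℕ → ℕ}
    (h : IsStrictPartition d lam) {i : ℕ} (hi : 1 ≤ i) (hid : i ≤ d) : d + 1 ≤ lam i + i := by
  induction hid using Nat.decreasingInduction with
  | self => have := h.2; omega
  | of_succ k hk ih =>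
    have := h.1 k hi hk
    have := ih (by omega)
    omega

theorem bsRestricted_card_eq_red_wlam_card_general (d r : ℕ) (lam : ℕ → ℕ)
    (hlow : ∀ i : ℕ, 1 ≤ i → i ≤ d → d + 1 ≤ lam i + i)
    (hsub : ∀ i : ℕ, 1 ≤ i → i ≤ d → lam i ≤ Zlam d r i)
    (w : Equiv.Perm ℤ) (hw : IsWdr d r w) :
    Nat.card (BSRestricted d r lam) =
      Nat.card {L : List ℕ //
        IsReducedWord (d + r) (w * wordProd (aLamWord d r lam).reverse) L} := by
  have hwords := (isRowForcing_aLamRuns (r := r) hlow).bijOn_wordLabeling_append (n := d + r)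
    (N := sizeP d lam) (fun x hx => mod_cast (lt_snd_of_mem_aLamRuns hx).2) hw.1
    (by rw [map_fst_aLamRuns hlow]; exact inversions_wordProd_aLamWord_subset hw hlow)
    (by rw [ncard_inversions_wdr hw, length_aLamRuns, sizeP_add_sigmaF hsub])
  rw [map_fst_aLamRuns hlow, ← wordProd_reverse] at hwords
  exact (Nat.card_congr (((comp_boxPair_bijOn hw).comp hwords).equiv _)).symm

/-- `|BS(Z(d,r))|_λ| = |Red(w^λ)|`. -/
theorem bsRestricted_card_eq_red_wlam_card (d r : ℕ) (hd : 1 ≤ d)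
    (lam : ℕ → ℕ) (hlam : IsStrictPartition d lam)
    (hsub : ∀ i : ℕ, 1 ≤ i → i ≤ d → lam i ≤ Zlam d r i)
    (w : Equiv.Perm ℤ) (hw : IsWdr d r w) :
    Nat.card (BSRestricted d r lam) =
      Nat.card {L : List ℕ //
        IsReducedWord (d + r) (w * wordProd (aLamWord d r lam).reverse) L} :=
  bsRestricted_card_eq_red_wlam_card_general d r lam (fun _ => hlam.add_one_le_apply_add) hsub w hw

end BST
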